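/- Let Γ be a finitely generated virtually abelian group and let μ be a probability measure on Γ with finite second moment whose support generates Γ as a semigroup. Then the limit, as ρ tends to 1 with ρ ∈ (0,1], of limsup_{n→∞} ‖π^ρ_n − μ_n×μ_n‖_TV equals 0. -/

import Mathlib

open scoped BigOperators Classical
open Filter Matrix MeasureTheory

namespace NSVA

noncomputable section

/-- Convolution of two real-valued functions on a group. -/
def conv {G : Type*} [Group G] (μ ν : G → ℝ) : G → ℝ :=
  fun g => ∑' h : G, μ h * ν (h⁻¹ * g)

/-- Convolution powers: `convPow μ 0 = δ_1`, `convPow μ (n+1) = (convPow μ n) * μ`. -/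
def convPow {G : Type*} [Group G] (μ : G → ℝ) : ℕ → G → ℝ
  | 0 => fun g => if g = 1 then 1 else 0
  | n + 1 => conv (convPow μ n) μ

/-- A probability measure on a countable set, viewed as a function. -/
def IsProb {G : Type*} (μ : G → ℝ) : Prop := (∀ g, 0 ≤ μ g) ∧ HasSum μ 1

/-- The support of `μ` generates the group as a semigroup. -/
def Nondeg {G : Type*} [Group G] (μ : G → ℝ) : Prop :=
  ∀ g : G, g ∈ Subsemigroup.closure {x : G | 0 < μ x}

/-- `μ` is aperiodic: `μ_n(1) > 0` for all large enough `n`. -/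
def Aperiodic {G : Type*} [Group G] (μ : G → ℝ) : Prop :=
  ∃ N : ℕ, ∀ n : ℕ, N ≤ n → 0 < convPow μ n 1

/-- Total variation distance between two (probability) functions. -/
def tv {Z : Type*} (p q : Z → ℝ) : ℝ := (1 / 2) * ∑' z : Z, |p z - q z|

/-- Word length with respect to a finite set `S₀`. -/
def wordLength {G : Type*} [Group G] (S₀ : Finset G) (g : G) : ℕ :=
  sInf {n : ℕ | ∃ l : List G, (∀ s ∈ l, s ∈ S₀) ∧ l.length = n ∧ l.prod = g}

/-- Finite second moment with respect to a word metric given by a finite symmetric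
generating set. -/
def FinSecondMoment {G : Type*} [Group G] (μ : G → ℝ) : Prop :=
  ∃ S₀ : Finset G, (∀ s ∈ S₀, s⁻¹ ∈ S₀) ∧ Subgroup.closure (S₀ : Set G) = ⊤ ∧
    Summable (fun g : G => (wordLength S₀ g : ℝ) ^ 2 * μ g)

/-- A group is virtually abelian if it has an abelian subgroup of finite index. -/
def VirtAbelian (G : Type*) [Group G] : Prop :=
  ∃ A : Subgroup G, A.index ≠ 0 ∧ ∀ a b : A, a * b = b * a

/-- The noised measure `π^ρ` on `G × G`. -/
def noised {G : Type*} (μ : G → ℝ) (ρ : ℝ) : G × G → ℝ :=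
  fun p => ρ * μ p.1 * μ p.2 + (1 - ρ) * μ p.1 * (if p.1 = p.2 then 1 else 0)

/-- First marginal of a measure on a product. -/
def marg1 {G₁ G₂ : Type*} (ν : G₁ × G₂ → ℝ) : G₁ → ℝ := fun γ₁ => ∑' γ₂ : G₂, ν (γ₁, γ₂)

/-- Second marginal of a measure on a product. -/
def marg2 {G₁ G₂ : Type*} (ν : G₁ × G₂ → ℝ) : G₂ → ℝ := fun γ₂ => ∑' γ₁ : G₁, ν (γ₁, γ₂)

/-- A system of representatives of the right cosets `Λ\Γ` containing the identity,
together with the representative map `rep`, constant on right cosets. -/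
structure RepSystem {Γ : Type*} [Group Γ] (Λ : Subgroup Γ) where
  Δ : Finset Γ
  one_mem : (1 : Γ) ∈ Δ
  rep : Γ → Γ
  rep_mem : ∀ γ : Γ, rep γ ∈ Δ
  rep_spec : ∀ γ : Γ, γ * (rep γ)⁻¹ ∈ Λ
  rep_idem : ∀ x ∈ Δ, rep x = x
  rep_coset : ∀ γ : Γ, ∀ v ∈ Λ, rep (v * γ) = rep γ

variable {Γ : Type*} [Group Γ] {Λ : Subgroup Γ} {m : ℕ}

/-- The cocycle `α(x,s) = ψ(x·s·(x^s)⁻¹) ∈ ℤ^m`. -/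
def cocycle (ψ : Λ ≃* Multiplicative (Fin m → ℤ)) (R : RepSystem Λ) (x s : Γ) : Fin m → ℤ :=
  Multiplicative.toAdd (ψ ⟨x * s * (R.rep (x * s))⁻¹, R.rep_spec (x * s)⟩)

/-- The transfer homomorphism `θ(γ) = ∑_{x∈Δ} α(x,γ)`. -/
def transfer (ψ : Λ ≃* Multiplicative (Fin m → ℤ)) (R : RepSystem Λ) (γ : Γ) : Fin m → ℤ :=
  ∑ x ∈ R.Δ, cocycle ψ R x γ

/-- `Φ(γ) = ψ(v)` where `γ = v·x`, `v ∈ Λ`, `x ∈ Δ`. -/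
def Phi (ψ : Λ ≃* Multiplicative (Fin m → ℤ)) (R : RepSystem Λ) (γ : Γ) : Fin m → ℤ :=
  Multiplicative.toAdd (ψ ⟨γ * (R.rep γ)⁻¹, R.rep_spec γ⟩)

/-- A 1-form on the quotient diagram. -/
def IsOneForm (R : RepSystem Λ) (ω : Γ → Γ → ℝ) : Prop :=
  ∀ x ∈ R.Δ, ∀ s : Γ, ω (R.rep (x * s)) s⁻¹ = -ω x s

/-- `χ(ω) = ∑_{x∈Δ} ∑_s c(x,s)·ω(x,s)` where `c(x,s) = μ(s)/#F`. -/
def chi (R : RepSystem Λ) (μ : Γ → ℝ) (ω : Γ → Γ → ℝ) : ℝ :=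
  ∑ x ∈ R.Δ, ∑' s : Γ, μ s / (Λ.index : ℝ) * ω x s

/-- Square-integrability of a 1-form. -/
def SqInt (R : RepSystem Λ) (μ : Γ → ℝ) (ω : Γ → Γ → ℝ) : Prop :=
  ∀ x ∈ R.Δ, Summable (fun s : Γ => μ s / (Λ.index : ℝ) * ω x s ^ 2)

/-- Harmonicity of a (square-integrable) 1-form. -/
def Harmonic (R : RepSystem Λ) (μ : Γ → ℝ) (ω : Γ → Γ → ℝ) : Prop :=
  SqInt R μ ω ∧ ∀ x ∈ R.Δ, (∑' s : Γ, μ s * ω x s) = chi R μ ω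

/-- The differential `df(x,s) = f(x^s) − f(x)`. -/
def dd (R : RepSystem Λ) (f : Γ → ℝ) : Γ → Γ → ℝ := fun x s => f (R.rep (x * s)) - f x

/-- `(u, f)` is a harmonic decomposition of the 1-form `ω`: `ω = u + df` with `u`
a harmonic 1-form. -/
def IsHarmDecomp (R : RepSystem Λ) (μ : Γ → ℝ) (ω u : Γ → Γ → ℝ) (f : Γ → ℝ) : Prop :=
  IsOneForm R u ∧ Harmonic R μ u ∧ ∀ x ∈ R.Δ, ∀ s : Γ, ω x s = u x s + dd R f x s

/-- The 1-form `v̂(x,s) = ⟨v, α(x,s)⟩` (standard inner product). -/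
def vhat (ψ : Λ ≃* Multiplicative (Fin m → ℤ)) (R : RepSystem Λ) (v : Fin m → ℝ) :
    Γ → Γ → ℝ :=
  fun x s => ∑ i, v i * (cocycle ψ R x s i : ℝ)

/-- The 1-form `v̂(x,s) = B(v, α(x,s))` for a bilinear form `B`. -/
def vhatB (ψ : Λ ≃* Multiplicative (Fin m → ℤ)) (R : RepSystem Λ)
    (B : (Fin m → ℝ) →ₗ[ℝ] (Fin m → ℝ) →ₗ[ℝ] ℝ) (v : Fin m → ℝ) : Γ → Γ → ℝ :=
  fun x s => B v (fun i => (cocycle ψ R x s i : ℝ))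

/-- The drift `ζ = (1/#F)·∑_{x∈Δ}∑_s μ(s)·α(x,s) ∈ ℝ^m`. -/
def drift (ψ : Λ ≃* Multiplicative (Fin m → ℤ)) (R : RepSystem Λ) (μ : Γ → ℝ) : Fin m → ℝ :=
  fun i => (Λ.index : ℝ)⁻¹ * ∑ x ∈ R.Δ, ∑' s : Γ, μ s * (cocycle ψ R x s i : ℝ)

/-- The covariance pairing `∑_{x,s} c(x,s)·u(x,s)·u'(x,s) − χ(u)·χ(u')`. -/
def cov (R : RepSystem Λ) (μ : Γ → ℝ) (u u' : Γ → Γ → ℝ) : ℝ :=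
  (∑ x ∈ R.Δ, ∑' s : Γ, μ s / (Λ.index : ℝ) * (u x s * u' x s)) - chi R μ u * chi R μ u'

/-- The transfer operator `ℒ_v` acting on functions `Δ → ℂ`. -/
def transferOp (ψ : Λ ≃* Multiplicative (Fin m → ℤ)) (R : RepSystem Λ) (μ : Γ → ℝ)
    (v : Fin m → ℝ) (f : Γ → ℂ) : Γ → ℂ :=
  fun x => ∑' s : Γ, (μ s : ℂ) *
    Complex.exp (2 * Real.pi * Complex.I * ((∑ i, v i * (cocycle ψ R x s i : ℝ)) : ℝ)) *
    f (R.rep (x * s))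

/-- The Gaussian density `ξ_A(w)` associated with a (positive-definite) matrix `A`. -/
def gauss {d : ℕ} (A : Matrix (Fin d) (Fin d) ℝ) (w : Fin d → ℝ) : ℝ :=
  (2 * Real.pi) ^ (-(d : ℝ) / 2) * A.det ^ (-(1 : ℝ) / 2) *
    Real.exp (-(w ⬝ᵥ A⁻¹.mulVec w) / 2)

/-- The product representative system for `Λ₁ × Λ₂ ≤ Γ₁ × Γ₂`. -/
def prodRep {Γ₁ : Type*} [Group Γ₁] {Γ₂ : Type*} [Group Γ₂]
    {Λ₁ : Subgroup Γ₁} {Λ₂ : Subgroup Γ₂}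
    (R₁ : RepSystem Λ₁) (R₂ : RepSystem Λ₂) : RepSystem (Λ₁.prod Λ₂) where
  Δ := R₁.Δ ×ˢ R₂.Δ
  one_mem := Finset.mem_product.mpr ⟨R₁.one_mem, R₂.one_mem⟩
  rep := fun p => (R₁.rep p.1, R₂.rep p.2)
  rep_mem := fun p => Finset.mem_product.mpr ⟨R₁.rep_mem p.1, R₂.rep_mem p.2⟩
  rep_spec := fun p => Subgroup.mem_prod.mpr ⟨R₁.rep_spec p.1, R₂.rep_spec p.2⟩
  rep_idem := fun x hx => by
    rcases Finset.mem_product.mp hx with ⟨h1, h2⟩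
    exact Prod.ext_iff.mpr ⟨R₁.rep_idem x.1 h1, R₂.rep_idem x.2 h2⟩
  rep_coset := fun p v hv => by
    rcases Subgroup.mem_prod.mp hv with ⟨h1, h2⟩
    exact Prod.ext_iff.mpr ⟨R₁.rep_coset p.1 v.1 h1, R₂.rep_coset p.2 v.2 h2⟩

/-- The 1-form `𝐯̂(x,s) = ⟨𝐯, α(x,s)⟩` on a product, standard inner product. -/
def vhat2 {Γ₁ : Type*} [Group Γ₁] {Γ₂ : Type*} [Group Γ₂]
    {Λ₁ : Subgroup Γ₁} {Λ₂ : Subgroup Γ₂} {m₁ m₂ : ℕ}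
    (ψ₁ : Λ₁ ≃* Multiplicative (Fin m₁ → ℤ)) (R₁ : RepSystem Λ₁)
    (ψ₂ : Λ₂ ≃* Multiplicative (Fin m₂ → ℤ)) (R₂ : RepSystem Λ₂)
    (v : (Fin m₁ → ℝ) × (Fin m₂ → ℝ)) : (Γ₁ × Γ₂) → (Γ₁ × Γ₂) → ℝ :=
  fun x s => (∑ i, v.1 i * (cocycle ψ₁ R₁ x.1 s.1 i : ℝ)) +
    ∑ i, v.2 i * (cocycle ψ₂ R₂ x.2 s.2 i : ℝ)

/-- The 1-form `𝐯̂(x,s) = ⟨𝐯, α(x,s)⟩` on a product, orthogonal-sum of the two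
bilinear forms `B₁`, `B₂`. -/
def vhatB2 {Γ₁ : Type*} [Group Γ₁] {Γ₂ : Type*} [Group Γ₂]
    {Λ₁ : Subgroup Γ₁} {Λ₂ : Subgroup Γ₂} {m₁ m₂ : ℕ}
    (ψ₁ : Λ₁ ≃* Multiplicative (Fin m₁ → ℤ)) (R₁ : RepSystem Λ₁)
    (B₁ : (Fin m₁ → ℝ) →ₗ[ℝ] (Fin m₁ → ℝ) →ₗ[ℝ] ℝ)
    (ψ₂ : Λ₂ ≃* Multiplicative (Fin m₂ → ℤ)) (R₂ : RepSystem Λ₂)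
    (B₂ : (Fin m₂ → ℝ) →ₗ[ℝ] (Fin m₂ → ℝ) →ₗ[ℝ] ℝ)
    (v : (Fin m₁ → ℝ) × (Fin m₂ → ℝ)) : (Γ₁ × Γ₂) → (Γ₁ × Γ₂) → ℝ :=
  fun x s => B₁ v.1 (fun i => (cocycle ψ₁ R₁ x.1 s.1 i : ℝ)) +
    B₂ v.2 (fun i => (cocycle ψ₂ R₂ x.2 s.2 i : ℝ))

end

section Averaging

open scoped ENNReal

/-- The averaging operator of a weight `w`, acting on functions by right translations. -/
noncomputable def avg {G : Type*} [Group G] (w : G → ℝ) (F : G → ℝ≥0∞) : G → ℝ≥0∞ :=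
  fun x => ∑' s, ENNReal.ofReal (w s) * F (x * s)

theorem IsProb.tsum_ofReal {G : Type*} {w : G → ℝ} (hw : IsProb w) :
    ∑' g, ENNReal.ofReal (w g) = 1 := by
  rw [← ENNReal.ofReal_tsum_of_nonneg hw.1 hw.2.summable, hw.2.tsum_eq, ENNReal.ofReal_one]

theorem IsProb.le_one {G : Type*} {w : G → ℝ} (hw : IsProb w) (g : G) : w g ≤ 1 :=
  le_hasSum hw.2 g fun i _ => hw.1 i

theorem isProb_of_tsum_ofReal {G : Type*} {w : G → ℝ} (h0 : ∀ g, 0 ≤ w g)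
    (h : ∑' g, ENNReal.ofReal (w g) = 1) : IsProb w := by
  have hs : Summable w := by
    have := ENNReal.summable_toReal (f := fun g => ENNReal.ofReal (w g)) (by rw [h]; simp)
    simpa [ENNReal.toReal_ofReal (h0 _)] using this
  refine ⟨h0, ?_⟩
  have h2 := ENNReal.ofReal_tsum_of_nonneg h0 hs
  rw [h, ENNReal.ofReal_eq_one] at h2
  exact h2 ▸ hs.hasSum

variable {G : Type*} [Group G]

theorem avg_mono {w : G → ℝ} {F F' : G → ℝ≥0∞} (h : ∀ x, F x ≤ F' x) (x : G) :
    avg w F x ≤ avg w F' x :=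
  ENNReal.tsum_le_tsum fun s => by gcongr; exact h _

theorem IsProb.avg_le {w : G → ℝ} (hw : IsProb w) {F : G → ℝ≥0∞} {c : ℝ≥0∞}
    (h : ∀ x, F x ≤ c) (x : G) : avg w F x ≤ c := by
  calc avg w F x ≤ ∑' s, ENNReal.ofReal (w s) * c := avg_mono (F' := fun _ => c) h x
    _ = c := by rw [ENNReal.tsum_mul_right, hw.tsum_ofReal, one_mul]

theorem IsProb.avg_iterate_le {w : G → ℝ} (hw : IsProb w) (n : ℕ) {F : G → ℝ≥0∞} {c : ℝ≥0∞}
    (h : ∀ x, F x ≤ c) (x : G) : (avg w)^[n] F x ≤ c := by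
  induction n generalizing F with
  | zero => exact h x
  | succ n ih => exact ih (hw.avg_le h)

theorem conv_nonneg {μ ν : G → ℝ} (hμ : ∀ g, 0 ≤ μ g) (hν : ∀ g, 0 ≤ ν g) (g : G) :
    0 ≤ conv μ ν g :=
  tsum_nonneg fun h => mul_nonneg (hμ h) (hν _)

theorem summable_conv {μ ν : G → ℝ} (hμ : IsProb μ) (hν : IsProb ν) (g : G) :
    Summable fun h => μ h * ν (h⁻¹ * g) :=
  hμ.2.summable.of_nonneg_of_le (fun h => mul_nonneg (hμ.1 h) (hν.1 _))
    fun h => mul_le_of_le_one_right (hμ.1 h) (hν.le_one _)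

theorem tsum_conv_mul {μ ν : G → ℝ} (hμ : IsProb μ) (hν : IsProb ν) (F : G → ℝ≥0∞) :
    ∑' g, ENNReal.ofReal (conv μ ν g) * F g =
      ∑' h, ENNReal.ofReal (μ h) * ∑' s, ENNReal.ofReal (ν s) * F (h * s) := by
  have h1 : ∀ g, ENNReal.ofReal (conv μ ν g) * F g =
      ∑' h, ENNReal.ofReal (μ h) * (ENNReal.ofReal (ν (h⁻¹ * g)) * F g) := by
    intro g
    rw [conv, ENNReal.ofReal_tsum_of_nonneg (fun h => mul_nonneg (hμ.1 h) (hν.1 _))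
      (summable_conv hμ hν g), ← ENNReal.tsum_mul_right]
    exact tsum_congr fun h => by rw [ENNReal.ofReal_mul (hμ.1 h), mul_assoc]
  rw [tsum_congr h1, ENNReal.tsum_comm]
  refine tsum_congr fun h => ?_
  rw [ENNReal.tsum_mul_left]
  congr 1
  rw [← (Equiv.mulLeft h).tsum_eq]
  simp

theorem IsProb.conv {μ ν : G → ℝ} (hμ : IsProb μ) (hν : IsProb ν) : IsProb (conv μ ν) := by
  refine isProb_of_tsum_ofReal (conv_nonneg hμ.1 hν.1) ?_
  have := tsum_conv_mul hμ hν fun _ => 1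
  simpa [hν.tsum_ofReal, hμ.tsum_ofReal] using this

theorem IsProb.convPow {μ : G → ℝ} (hμ : IsProb μ) (n : ℕ) : IsProb (convPow μ n) := by
  induction n with
  | zero =>
    refine ⟨fun g => ?_, ?_⟩
    · simp only [NSVA.convPow]; split_ifs <;> norm_num
    · exact hasSum_ite_eq 1 1
  | succ n ih => exact ih.conv hμ

theorem tsum_convPow_mul {μ : G → ℝ} (hμ : IsProb μ) (n : ℕ) (F : G → ℝ≥0∞) (x : G) :
    ∑' g, ENNReal.ofReal (convPow μ n g) * F (x * g) = (avg μ)^[n] F x := by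
  induction n generalizing F x with
  | zero =>
    rw [tsum_eq_single 1]
    · simp [convPow]
    · intro g hg
      simp [convPow, hg]
  | succ n ih =>
    rw [convPow, tsum_conv_mul (hμ.convPow n) hμ fun g => F (x * g), Function.iterate_succ_apply,
      ← ih]
    simp only [avg, mul_assoc]

theorem tsum_convPow_mul_one {μ : G → ℝ} (hμ : IsProb μ) (n : ℕ) (F : G → ℝ≥0∞) :
    ∑' g, ENNReal.ofReal (convPow μ n g) * F g = (avg μ)^[n] F 1 := by
  simpa using tsum_convPow_mul hμ n F 1

theorem avg_add_const {μ : G → ℝ} (hμ : IsProb μ) (F : G → ℝ≥0∞) (c : ℝ≥0∞) (x : G) :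
    avg μ (fun y => F y + c) x = avg μ F x + c := by
  simp only [avg, mul_add]
  rw [ENNReal.tsum_add, ENNReal.tsum_mul_right, hμ.tsum_ofReal, one_mul]

theorem convPow_succ_pos {μ : G → ℝ} (hμ : IsProb μ) {n : ℕ} {g s : G}
    (hg : 0 < convPow μ n g) (hs : 0 < μ s) : 0 < convPow μ (n + 1) (g * s) := by
  refine (mul_pos hg hs).trans_le ?_
  have := (summable_conv (hμ.convPow n) hμ (g * s)).le_tsum g
    fun j _ => mul_nonneg ((hμ.convPow n).1 j) (hμ.1 _)
  simpa [convPow, conv] using this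

theorem exists_pos_of_convPow_succ_pos {μ : G → ℝ} (hμ : IsProb μ) {n : ℕ} {g : G}
    (hg : 0 < convPow μ (n + 1) g) : ∃ h, 0 < convPow μ n h ∧ 0 < μ (h⁻¹ * g) := by
  by_contra! hcon
  have : convPow μ (n + 1) g = 0 := by
    simp only [convPow, conv]
    rw [← tsum_zero (α := ℝ) (β := G)]
    refine tsum_congr fun h => ?_
    rcases ((hμ.convPow n).1 h).eq_or_lt with h0 | h0
    · rw [← h0, zero_mul]
    · rw [le_antisymm (hcon h h0) (hμ.1 _), mul_zero]
  exact hg.ne' this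

end Averaging

section Noise

open scoped ENNReal

variable {Γ : Type*} {μ : Γ → ℝ}

theorem noised_nonneg (hμ : IsProb μ) {ρ : ℝ} (h0 : 0 ≤ ρ) (h1 : ρ ≤ 1) (p : Γ × Γ) :
    0 ≤ noised μ ρ p := by
  have ha := hμ.1 p.1
  have hb := hμ.1 p.2
  have hc : 0 ≤ 1 - ρ := by linarith
  unfold noised
  split_ifs <;> positivity

theorem tsum_noised_mul (hμ : IsProb μ) {ρ : ℝ} (h0 : 0 ≤ ρ) (h1 : ρ ≤ 1) (F : Γ × Γ → ℝ≥0∞) :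
    ∑' p, ENNReal.ofReal (noised μ ρ p) * F p =
      ENNReal.ofReal ρ * (∑' s, ENNReal.ofReal (μ s) * ∑' s', ENNReal.ofReal (μ s') * F (s, s')) +
      ENNReal.ofReal (1 - ρ) * ∑' s, ENNReal.ofReal (μ s) * F (s, s) := by
  have hc : 0 ≤ 1 - ρ := by linarith
  have key : ∀ s s', ENNReal.ofReal (noised μ ρ (s, s')) * F (s, s') =
      ENNReal.ofReal ρ * (ENNReal.ofReal (μ s) * (ENNReal.ofReal (μ s') * F (s, s'))) +
      (if s' = s then ENNReal.ofReal (1 - ρ) * (ENNReal.ofReal (μ s) * F (s, s)) else 0) := by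
    intro s s'
    have ha := hμ.1 s
    have hb := hμ.1 s'
    unfold noised
    rw [ENNReal.ofReal_add (by positivity) (by dsimp only; split_ifs <;> positivity)]
    simp only [ENNReal.ofReal_mul (mul_nonneg h0 ha), ENNReal.ofReal_mul h0]
    by_cases h : s' = s
    · subst h
      simp only [if_true, mul_one, ENNReal.ofReal_mul hc]
      ring
    · rw [if_neg (Ne.symm h), if_neg h]
      simp [mul_assoc]
  rw [ENNReal.tsum_prod', ← ENNReal.tsum_mul_left, ← ENNReal.tsum_mul_left, ← ENNReal.tsum_add]
  refine tsum_congr fun s => ?_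
  rw [tsum_congr (key s), ENNReal.tsum_add, tsum_ite_eq, ENNReal.tsum_mul_left,
    ENNReal.tsum_mul_left]

theorem isProb_noised (hμ : IsProb μ) {ρ : ℝ} (h0 : 0 ≤ ρ) (h1 : ρ ≤ 1) :
    IsProb (noised μ ρ) := by
  refine isProb_of_tsum_ofReal (noised_nonneg hμ h0 h1) ?_
  have := tsum_noised_mul hμ h0 h1 fun _ => 1
  simp only [mul_one, hμ.tsum_ofReal] at this
  rw [this, ← ENNReal.ofReal_add h0 (by linarith)]
  simp

variable [Group Γ]

theorem avg_noised_comp_fst (hμ : IsProb μ) {ρ : ℝ} (h0 : 0 ≤ ρ) (h1 : ρ ≤ 1) (f : Γ → ℝ≥0∞) :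
    avg (noised μ ρ) (f ∘ Prod.fst) = avg μ f ∘ Prod.fst := by
  funext x
  simp only [avg, Function.comp]
  rw [tsum_noised_mul hμ h0 h1 fun p => f (x * p).1]
  simp only [Prod.fst_mul, ENNReal.tsum_mul_right, hμ.tsum_ofReal, one_mul]
  rw [← add_mul, ← ENNReal.ofReal_add h0 (by linarith)]
  simp

theorem avg_noised_comp_snd (hμ : IsProb μ) {ρ : ℝ} (h0 : 0 ≤ ρ) (h1 : ρ ≤ 1) (f : Γ → ℝ≥0∞) :
    avg (noised μ ρ) (f ∘ Prod.snd) = avg μ f ∘ Prod.snd := by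
  funext x
  simp only [avg, Function.comp]
  rw [tsum_noised_mul hμ h0 h1 fun p => f (x * p).2]
  simp only [Prod.snd_mul, ENNReal.tsum_mul_right, hμ.tsum_ofReal, one_mul]
  rw [← add_mul, ← ENNReal.ofReal_add h0 (by linarith)]
  simp

theorem tsum_convPow_noised_fst (hμ : IsProb μ) {ρ : ℝ} (h0 : 0 ≤ ρ) (h1 : ρ ≤ 1) (n : ℕ)
    (f : Γ → ℝ≥0∞) :
    ∑' p : Γ × Γ, ENNReal.ofReal (convPow (noised μ ρ) n p) * f p.1 =
      ∑' g, ENNReal.ofReal (convPow μ n g) * f g := by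
  rw [tsum_convPow_mul_one (isProb_noised hμ h0 h1) n fun p : Γ × Γ => f p.1,
    tsum_convPow_mul_one hμ]
  have : ∀ (n : ℕ) (f : Γ → ℝ≥0∞),
      (avg (noised μ ρ))^[n] (f ∘ Prod.fst) = (avg μ)^[n] f ∘ Prod.fst := by
    intro n
    induction n with
    | zero => intro f; rfl
    | succ n ih => intro f; simp only [Function.iterate_succ_apply,
        avg_noised_comp_fst hμ h0 h1, ih]
  exact congrFun (this n f) 1

theorem tsum_convPow_noised_snd (hμ : IsProb μ) {ρ : ℝ} (h0 : 0 ≤ ρ) (h1 : ρ ≤ 1) (n : ℕ)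
    (f : Γ → ℝ≥0∞) :
    ∑' p : Γ × Γ, ENNReal.ofReal (convPow (noised μ ρ) n p) * f p.2 =
      ∑' g, ENNReal.ofReal (convPow μ n g) * f g := by
  rw [tsum_convPow_mul_one (isProb_noised hμ h0 h1) n fun p : Γ × Γ => f p.2,
    tsum_convPow_mul_one hμ]
  have : ∀ (n : ℕ) (f : Γ → ℝ≥0∞),
      (avg (noised μ ρ))^[n] (f ∘ Prod.snd) = (avg μ)^[n] f ∘ Prod.snd := by
    intro n
    induction n with
    | zero => intro f; rfl
    | succ n ih => intro f; simp only [Function.iterate_succ_apply,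
        avg_noised_comp_snd hμ h0 h1, ih]
  exact congrFun (this n f) 1

theorem convPow_noised_pos (hμ : IsProb μ) {ρ : ℝ} (h0 : 0 < ρ) (h1 : ρ ≤ 1) {n : ℕ} {x y : Γ}
    (hx : 0 < convPow μ n x) (hy : 0 < convPow μ n y) : 0 < convPow (noised μ ρ) n (x, y) := by
  induction n generalizing x y with
  | zero =>
    have hx1 : x = 1 := by by_contra h; simp [convPow, h] at hx
    have hy1 : y = 1 := by by_contra h; simp [convPow, h] at hy
    simp [convPow, hx1, hy1]
  | succ n ih =>
    obtain ⟨g, hg, hg'⟩ := exists_pos_of_convPow_succ_pos hμ hx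
    obtain ⟨h, hh, hh'⟩ := exists_pos_of_convPow_succ_pos hμ hy
    have hs : 0 < noised μ ρ (g⁻¹ * x, h⁻¹ * y) := by
      have hc : 0 ≤ 1 - ρ := by linarith
      unfold noised
      dsimp only
      split_ifs <;> positivity
    simpa using convPow_succ_pos (isProb_noised hμ h0.le h1) (ih hg hh) hs

end Noise

section PositiveKernels

/-- Positive semidefinite symmetric real kernels. -/
def PSDKernel {ι : Type*} (K : ι → ι → ℝ) : Prop :=
  (∀ x y, K x y = K y x) ∧
    ∀ (n : ℕ) (x : Fin n → ι) (c : Fin n → ℝ), 0 ≤ ∑ i, ∑ j, c i * c j * K (x i) (x j)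

namespace PSDKernel

variable {ι : Type*} {K K' : ι → ι → ℝ}

theorem sum_nonneg (hK : PSDKernel K) {κ : Type*} [Fintype κ] (x : κ → ι) (c : κ → ℝ) :
    0 ≤ ∑ i, ∑ j, c i * c j * K (x i) (x j) := by
  have h := hK.2 (Fintype.card κ) (x ∘ (Fintype.equivFin κ).symm) (c ∘ (Fintype.equivFin κ).symm)
  refine h.trans_eq ?_
  rw [← (Fintype.equivFin κ).symm.sum_comp]
  refine Finset.sum_congr rfl fun i _ => ?_
  rw [← (Fintype.equivFin κ).symm.sum_comp]
  rfl

theorem add (hK : PSDKernel K) (hK' : PSDKernel K') : PSDKernel fun x y => K x y + K' x y := by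
  refine ⟨fun x y => by simp only [hK.1 x, hK'.1 x], fun n x c => ?_⟩
  simp only [mul_add, Finset.sum_add_distrib]
  exact add_nonneg (hK.2 n x c) (hK'.2 n x c)

theorem const_mul (hK : PSDKernel K) {a : ℝ} (ha : 0 ≤ a) : PSDKernel fun x y => a * K x y := by
  refine ⟨fun x y => by simp only [hK.1 x], fun n x c => ?_⟩
  have : ∑ i, ∑ j, c i * c j * (a * K (x i) (x j)) = a * ∑ i, ∑ j, c i * c j * K (x i) (x j) := by
    simp only [Finset.mul_sum]
    exact Finset.sum_congr rfl fun i _ => Finset.sum_congr rfl fun j _ => by ring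
  rw [this]
  exact mul_nonneg ha (hK.2 n x c)

theorem of_mul (f : ι → ℝ) : PSDKernel fun x y => f x * f y := by
  refine ⟨fun x y => mul_comm _ _, fun n x c => ?_⟩
  have : ∑ i, ∑ j, c i * c j * (f (x i) * f (x j)) = (∑ i, c i * f (x i)) ^ 2 := by
    rw [sq, Finset.sum_mul_sum]
    exact Finset.sum_congr rfl fun i _ => Finset.sum_congr rfl fun j _ => by ring
  rw [this]
  positivity

theorem zero : PSDKernel fun _ _ : ι => (0 : ℝ) := by simpa using of_mul fun _ : ι => (0 : ℝ)

theorem diag_nonneg (hK : PSDKernel K) (x : ι) : 0 ≤ K x x := by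
  simpa using hK.2 1 (fun _ => x) fun _ => 1

theorem quadratic_nonneg (hK : PSDKernel K) (x y : ι) (a b : ℝ) :
    0 ≤ a ^ 2 * K x x + 2 * a * b * K x y + b ^ 2 * K y y := by
  have := hK.2 2 ![x, y] ![a, b]
  simp only [Fin.sum_univ_two, Matrix.cons_val_zero, Matrix.cons_val_one] at this
  rw [hK.1 y x] at this
  linarith

theorem sq_le (hK : PSDKernel K) (x y : ι) : K x y ^ 2 ≤ K x x * K y y := by
  have h := discrim_le_zero (a := K x x) (b := 2 * K x y) (c := K y y) fun t => by
    have := hK.quadratic_nonneg x y t 1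
    linarith
  rw [discrim] at h
  linarith

end PSDKernel

theorem summable_mul_bounded {ι : Type*} {w F : ι → ℝ} (hw : Summable w) (h0 : ∀ i, 0 ≤ w i)
    {C : ℝ} (hF : ∀ i, |F i| ≤ C) : Summable fun i => w i * F i := by
  refine Summable.of_norm_bounded (hw.mul_right C) fun i => ?_
  rw [Real.norm_eq_abs, abs_mul, abs_of_nonneg (h0 i)]
  exact mul_le_mul_of_nonneg_left (hF i) (h0 i)

theorem IsProb.prod {ι κ : Type*} {w : ι → ℝ} {v : κ → ℝ} (hw : IsProb w) (hv : IsProb v) :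
    IsProb fun p : ι × κ => w p.1 * v p.2 := by
  refine ⟨fun p => mul_nonneg (hw.1 _) (hv.1 _), ?_⟩
  simpa using hw.2.mul hv.2 (hw.2.summable.mul_of_nonneg hv.2.summable hw.1 hv.1)

theorem PSDKernel.tsum_nonneg {ι : Type*} {Q : ι → ι → ℝ} (hQ : PSDKernel Q) {C : ℝ}
    (hC : ∀ x y, |Q x y| ≤ C) {w : ι → ℝ} (hw : IsProb w) :
    0 ≤ ∑' p : ι × ι, w p.1 * w p.2 * Q p.1 p.2 := by
  have hs : Summable fun p : ι × ι => w p.1 * w p.2 * Q p.1 p.2 :=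
    summable_mul_bounded (hw.prod hw).2.summable (hw.prod hw).1 fun p => hC p.1 p.2
  have ht : Tendsto (fun S : Finset ι => S ×ˢ S) atTop atTop :=
    tendsto_atTop_atTop.2 fun T => ⟨T.image Prod.fst ∪ T.image Prod.snd, fun S hS p hp =>
      Finset.mem_product.2
        ⟨hS (Finset.mem_union_left _ (Finset.mem_image_of_mem _ hp)),
          hS (Finset.mem_union_right _ (Finset.mem_image_of_mem _ hp))⟩⟩
  have hlim : Tendsto (fun T : Finset (ι × ι) => ∑ p ∈ T, w p.1 * w p.2 * Q p.1 p.2) atTop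
      (nhds (∑' p : ι × ι, w p.1 * w p.2 * Q p.1 p.2)) := hs.hasSum
  refine ge_of_tendsto' (hlim.comp ht) fun S => ?_
  have h := hQ.sum_nonneg (κ := S) (fun i => i) fun i => w i
  refine h.trans_eq ?_
  rw [Function.comp_apply, Finset.sum_product, ← Finset.sum_coe_sort S]
  refine Finset.sum_congr rfl fun i _ => ?_
  exact Finset.sum_coe_sort S fun j => w i * w j * Q i j

theorem PSDKernel.tsum_le_tsum_diag {ι : Type*} {Q : ι → ι → ℝ} (hQ : PSDKernel Q) {C : ℝ}
    (hC : ∀ x y, |Q x y| ≤ C) {w : ι → ℝ} (hw : IsProb w) :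
    ∑' p : ι × ι, w p.1 * w p.2 * Q p.1 p.2 ≤ ∑' s, w s * Q s s := by
  have hs : Summable fun p : ι × ι => w p.1 * w p.2 * Q p.1 p.2 :=
    summable_mul_bounded (hw.prod hw).2.summable (hw.prod hw).1 fun p => hC p.1 p.2
  have hd : Summable fun s => w s * Q s s := summable_mul_bounded hw.2.summable hw.1 fun s => hC s s
  have h1 : HasSum (fun p : ι × ι => w p.1 * Q p.1 p.1 * w p.2) (∑' s, w s * Q s s) := by
    have hsum : Summable fun p : ι × ι => w p.1 * Q p.1 p.1 * w p.2 := by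
      refine (summable_mul_bounded (hw.prod hw).2.summable (hw.prod hw).1
        fun p => hC p.1 p.1).congr fun p => by ring
    simpa using hd.hasSum.mul hw.2 hsum
  have h2 : HasSum (fun p : ι × ι => w p.1 * (w p.2 * Q p.2 p.2)) (∑' s, w s * Q s s) := by
    have hsum : Summable fun p : ι × ι => w p.1 * (w p.2 * Q p.2 p.2) := by
      refine (summable_mul_bounded (hw.prod hw).2.summable (hw.prod hw).1
        fun p => hC p.2 p.2).congr fun p => by ring
    simpa using hw.2.mul hd.hasSum hsum
  have h3 := hasSum_le (fun p => ?_) (hs.hasSum.add hs.hasSum) (h1.add h2)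
  · linarith
  · have hq := hQ.quadratic_nonneg p.1 p.2 1 (-1)
    have := mul_nonneg (mul_nonneg (hw.1 p.1) (hw.1 p.2)) hq
    nlinarith

theorem PSDKernel.sum_translate {Γ ι : Type*} {K : Γ → Γ → ℝ} (hK : PSDKernel K)
    (g : Γ → ι → Γ) {n : ℕ} (x : Fin n → Γ) (c : Fin n → ℝ) :
    PSDKernel fun s s' : ι => ∑ i, ∑ j, c i * c j * K (g (x i) s) (g (x j) s') := by
  refine ⟨fun s s' => ?_, fun k y d => ?_⟩
  · dsimp only
    rw [Finset.sum_comm]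
    refine Finset.sum_congr rfl fun i _ => Finset.sum_congr rfl fun j _ => ?_
    rw [hK.1, mul_comm (c j)]
  · refine (hK.sum_nonneg (κ := Fin k × Fin n) (fun p => g (x p.2) (y p.1))
      fun p => d p.1 * c p.2).trans_eq ?_
    rw [Fintype.sum_prod_type]
    refine Finset.sum_congr rfl fun a _ => ?_
    simp only [Finset.mul_sum, Fintype.sum_prod_type]
    rw [Finset.sum_comm]
    refine Finset.sum_congr rfl fun b _ => Finset.sum_congr rfl fun i _ =>
      Finset.sum_congr rfl fun j _ => by ring

theorem abs_sum_translate_le {Γ ι : Type*} {K : Γ → Γ → ℝ} {C : ℝ} (hC : ∀ x y, |K x y| ≤ C)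
    (g : Γ → ι → Γ) {n : ℕ} (x : Fin n → Γ) (c : Fin n → ℝ) (s s' : ι) :
    |∑ i, ∑ j, c i * c j * K (g (x i) s) (g (x j) s')| ≤ ∑ i, ∑ j, |c i * c j| * C := by
  refine (Finset.abs_sum_le_sum_abs _ _).trans (Finset.sum_le_sum fun i _ => ?_)
  refine (Finset.abs_sum_le_sum_abs _ _).trans (Finset.sum_le_sum fun j _ => ?_)
  rw [abs_mul]
  exact mul_le_mul_of_nonneg_left (hC _ _) (abs_nonneg _)

end PositiveKernels

section KernelSteps

variable {Γ : Type*} [Group Γ]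

/-- The right convolution of a kernel with `μ × μ`. -/
noncomputable def indepStep (μ : Γ → ℝ) (K : Γ → Γ → ℝ) (x y : Γ) : ℝ :=
  ∑' p : Γ × Γ, μ p.1 * μ p.2 * K (x * p.1⁻¹) (y * p.2⁻¹)

/-- The right convolution of a kernel with the diagonal copy of `μ`. -/
noncomputable def diagStep (μ : Γ → ℝ) (K : Γ → Γ → ℝ) (x y : Γ) : ℝ :=
  ∑' s, μ s * K (x * s⁻¹) (y * s⁻¹)

/-- The right convolution of a kernel with `noised μ ρ`. -/
noncomputable def noisedStep (μ : Γ → ℝ) (ρ : ℝ) (K : Γ → Γ → ℝ) (x y : Γ) : ℝ :=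
  ρ * indepStep μ K x y + (1 - ρ) * diagStep μ K x y

variable {μ : Γ → ℝ}

theorem summable_indepStep (hμ : IsProb μ) {K : Γ → Γ → ℝ} {C : ℝ} (hC : ∀ x y, |K x y| ≤ C)
    (x y : Γ) : Summable fun p : Γ × Γ => μ p.1 * μ p.2 * K (x * p.1⁻¹) (y * p.2⁻¹) :=
  summable_mul_bounded (hμ.prod hμ).2.summable (hμ.prod hμ).1 fun _ => hC _ _

theorem summable_diagStep (hμ : IsProb μ) {K : Γ → Γ → ℝ} {C : ℝ} (hC : ∀ x y, |K x y| ≤ C)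
    (x y : Γ) : Summable fun s => μ s * K (x * s⁻¹) (y * s⁻¹) :=
  summable_mul_bounded hμ.2.summable hμ.1 fun _ => hC _ _

theorem sum_sum_tsum_comm {κ : Type*} {n : ℕ} {f : Fin n → Fin n → κ → ℝ}
    (hf : ∀ i j, Summable (f i j)) (c : Fin n → ℝ) :
    ∑ i, ∑ j, c i * c j * ∑' p, f i j p = ∑' p, ∑ i, ∑ j, c i * c j * f i j p :=
  (hasSum_sum fun i _ => hasSum_sum fun j _ => (hf i j).hasSum.mul_left (c i * c j)).tsum_eq.symm

theorem sum_indepStep (hμ : IsProb μ) {K : Γ → Γ → ℝ} {C : ℝ} (hC : ∀ x y, |K x y| ≤ C)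
    {n : ℕ} (x : Fin n → Γ) (c : Fin n → ℝ) :
    ∑ i, ∑ j, c i * c j * indepStep μ K (x i) (x j) = ∑' p : Γ × Γ, μ p.1 * μ p.2 *
      ∑ i, ∑ j, c i * c j * K (x i * p.1⁻¹) (x j * p.2⁻¹) := by
  simp only [indepStep]
  rw [sum_sum_tsum_comm (fun i j => summable_indepStep hμ hC (x i) (x j))]
  simp only [Finset.mul_sum]
  exact tsum_congr fun p => Finset.sum_congr rfl fun i _ => Finset.sum_congr rfl fun j _ => by ring

theorem sum_diagStep (hμ : IsProb μ) {K : Γ → Γ → ℝ} {C : ℝ} (hC : ∀ x y, |K x y| ≤ C)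
    {n : ℕ} (x : Fin n → Γ) (c : Fin n → ℝ) :
    ∑ i, ∑ j, c i * c j * diagStep μ K (x i) (x j) = ∑' s, μ s *
      ∑ i, ∑ j, c i * c j * K (x i * s⁻¹) (x j * s⁻¹) := by
  simp only [diagStep]
  rw [sum_sum_tsum_comm (fun i j => summable_diagStep hμ hC (x i) (x j))]
  simp only [Finset.mul_sum]
  exact tsum_congr fun p => Finset.sum_congr rfl fun i _ => Finset.sum_congr rfl fun j _ => by ring

theorem indepStep_symm {K : Γ → Γ → ℝ} (hK : PSDKernel K) (x y : Γ) :
    indepStep μ K x y = indepStep μ K y x := by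
  simp only [indepStep]
  rw [← (Equiv.prodComm Γ Γ).tsum_eq]
  refine tsum_congr fun p => ?_
  rw [hK.1]
  simp only [Equiv.prodComm_apply, Prod.fst_swap, Prod.snd_swap]
  ring

theorem PSDKernel.indepStep (hμ : IsProb μ) {K : Γ → Γ → ℝ} {C : ℝ} (hC : ∀ x y, |K x y| ≤ C)
    (hK : PSDKernel K) : PSDKernel (indepStep μ K) := by
  refine ⟨indepStep_symm hK, fun n x c => ?_⟩
  rw [sum_indepStep hμ hC]
  have h1 := hK.sum_translate (fun x s : Γ => x * s⁻¹) x c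
  have h2 := abs_sum_translate_le hC (fun x s : Γ => x * s⁻¹) x c
  exact PSDKernel.tsum_nonneg h1 h2 hμ

theorem PSDKernel.diagStep_sub_indepStep (hμ : IsProb μ) {K : Γ → Γ → ℝ} {C : ℝ}
    (hC : ∀ x y, |K x y| ≤ C) (hK : PSDKernel K) :
    PSDKernel fun x y => diagStep μ K x y - NSVA.indepStep μ K x y := by
  refine ⟨fun x y => ?_, fun n x c => ?_⟩
  · dsimp only
    rw [indepStep_symm hK, diagStep, diagStep]
    congr 1
    exact tsum_congr fun s => by rw [hK.1]
  · simp only [mul_sub, Finset.sum_sub_distrib]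
    rw [sum_indepStep hμ hC, sum_diagStep hμ hC, sub_nonneg]
    have h1 := hK.sum_translate (fun x s : Γ => x * s⁻¹) x c
    have h2 := abs_sum_translate_le hC (fun x s : Γ => x * s⁻¹) x c
    exact PSDKernel.tsum_le_tsum_diag h1 h2 hμ

theorem PSDKernel.noisedStep (hμ : IsProb μ) {K : Γ → Γ → ℝ} {C : ℝ} (hC : ∀ x y, |K x y| ≤ C)
    (hK : PSDKernel K) {ρ : ℝ} (hρ : ρ ≤ 1) : PSDKernel (noisedStep μ ρ K) := by
  have h := (hK.indepStep hμ hC).add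
    ((hK.diagStep_sub_indepStep hμ hC).const_mul (sub_nonneg.2 hρ))
  convert h using 3 with x y
  simp only [NSVA.noisedStep]
  ring

theorem tsum_noised_mul_eq_noisedStep (hμ : IsProb μ) (ρ : ℝ) {K : Γ → Γ → ℝ} {C : ℝ}
    (hC : ∀ x y, |K x y| ≤ C) (x y : Γ) :
    ∑' p : Γ × Γ, K (x * p.1⁻¹) (y * p.2⁻¹) * noised μ ρ p = noisedStep μ ρ K x y := by
  have hinj : Function.Injective fun s : Γ => (s, s) := fun a b h => congrArg Prod.fst h
  have hd : HasSum (fun p : Γ × Γ => μ p.1 * (if p.1 = p.2 then 1 else 0) *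
      K (x * p.1⁻¹) (y * p.2⁻¹)) (diagStep μ K x y) := by
    rw [← hinj.hasSum_iff]
    · have h := (summable_diagStep hμ hC x y).hasSum
      simpa [Function.comp_def, diagStep] using h
    · intro p hp
      have : p.1 ≠ p.2 := fun h => hp ⟨p.1, Prod.ext rfl h⟩
      simp [this]
  have hi := (summable_indepStep hμ hC x y).hasSum
  rw [noisedStep, indepStep, ← ((hi.mul_left ρ).add (hd.mul_left (1 - ρ))).tsum_eq]
  refine tsum_congr fun p => ?_
  rw [noised]
  ring

theorem conv_eq_tsum {G : Type*} [Group G] (μ ν : G → ℝ) (g : G) :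
    conv μ ν g = ∑' s, μ (g * s⁻¹) * ν s := by
  rw [conv, ← ((Equiv.inv G).trans (Equiv.mulLeft g)).tsum_eq]
  simp

theorem IsProb.abs_le_one {G : Type*} {w : G → ℝ} (hw : IsProb w) (g : G) : |w g| ≤ 1 := by
  rw [abs_of_nonneg (hw.1 g)]
  exact hw.le_one g

theorem convPow_noised_succ (hμ : IsProb μ) {ρ : ℝ} (h0 : 0 ≤ ρ) (h1 : ρ ≤ 1) (n : ℕ)
    (x y : Γ) : convPow (noised μ ρ) (n + 1) (x, y) =
      noisedStep μ ρ (fun a b => convPow (noised μ ρ) n (a, b)) x y := by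
  rw [← tsum_noised_mul_eq_noisedStep hμ ρ (C := 1), convPow, conv_eq_tsum]
  · rfl
  · exact fun a b => ((isProb_noised hμ h0 h1).convPow n).abs_le_one (a, b)

theorem convPow_mul_convPow_succ (hμ : IsProb μ) (n : ℕ) (x y : Γ) :
    convPow μ (n + 1) x * convPow μ (n + 1) y =
      noisedStep μ 1 (fun a b => convPow μ n a * convPow μ n b) x y := by
  have h : ∀ x : Γ, Summable fun s => convPow μ n (x * s⁻¹) * μ s := fun x =>
    (summable_mul_bounded hμ.2.summable hμ.1 fun s =>
      (hμ.convPow n).abs_le_one (x * s⁻¹)).congr fun s => mul_comm _ _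
  simp only [noisedStep, sub_self, zero_mul, add_zero, one_mul, indepStep, convPow, conv_eq_tsum]
  rw [(h x).tsum_mul_tsum (h y)]
  · exact tsum_congr fun p => by ring
  · exact (h x).mul_of_nonneg (h y) (fun s => mul_nonneg ((hμ.convPow n).1 _) (hμ.1 _))
      fun s => mul_nonneg ((hμ.convPow n).1 _) (hμ.1 _)

end KernelSteps

section KernelComparison

variable {Γ : Type*} [Group Γ] {μ : Γ → ℝ}

theorem indepStep_lin (hμ : IsProb μ) {K K' : Γ → Γ → ℝ} {C C' : ℝ} (hC : ∀ x y, |K x y| ≤ C)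
    (hC' : ∀ x y, |K' x y| ≤ C') (a b : ℝ) (x y : Γ) :
    indepStep μ (fun x y => a * K x y + b * K' x y) x y =
      a * indepStep μ K x y + b * indepStep μ K' x y := by
  have h := ((summable_indepStep hμ hC x y).hasSum.mul_left a).add
    ((summable_indepStep hμ hC' x y).hasSum.mul_left b)
  rw [indepStep, indepStep, indepStep, ← h.tsum_eq]
  exact tsum_congr fun p => by ring

theorem diagStep_lin (hμ : IsProb μ) {K K' : Γ → Γ → ℝ} {C C' : ℝ} (hC : ∀ x y, |K x y| ≤ C)
    (hC' : ∀ x y, |K' x y| ≤ C') (a b : ℝ) (x y : Γ) :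
    diagStep μ (fun x y => a * K x y + b * K' x y) x y =
      a * diagStep μ K x y + b * diagStep μ K' x y := by
  have h := ((summable_diagStep hμ hC x y).hasSum.mul_left a).add
    ((summable_diagStep hμ hC' x y).hasSum.mul_left b)
  rw [diagStep, diagStep, diagStep, ← h.tsum_eq]
  exact tsum_congr fun p => by ring

theorem abs_lin_le {a b k k' C C' : ℝ} (h : |k| ≤ C) (h' : |k'| ≤ C') :
    |a * k + b * k'| ≤ |a| * C + |b| * C' := by
  refine (abs_add_le _ _).trans ?_
  rw [abs_mul, abs_mul]
  gcongr

theorem abs_convPow_mul_le (hμ : IsProb μ) (n : ℕ) (x y : Γ) :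
    |convPow μ n x * convPow μ n y| ≤ 1 := by
  rw [abs_mul]
  exact mul_le_one₀ ((hμ.convPow n).abs_le_one x) (abs_nonneg _) ((hμ.convPow n).abs_le_one y)

theorem convPow_zero_pair (ν : Γ × Γ → ℝ) (x y : Γ) :
    convPow ν 0 (x, y) = convPow μ 0 x * convPow μ 0 y := by
  simp only [convPow, Prod.mk_eq_one]
  by_cases hx : x = 1 <;> by_cases hy : y = 1 <;> simp [hx, hy]

/-- The noised walk dominates the independent walk as a kernel. -/
theorem psdKernel_noised_sub (hμ : IsProb μ) {ρ : ℝ} (h0 : 0 ≤ ρ) (h1 : ρ ≤ 1) (n : ℕ) :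
    PSDKernel fun x y => 1 * convPow (noised μ ρ) n (x, y) +
      (-1) * (convPow μ n x * convPow μ n y) := by
  induction n with
  | zero =>
    convert PSDKernel.zero (ι := Γ) using 3 with x y
    rw [convPow_zero_pair (μ := μ)]
    ring
  | succ n ih =>
    have hP : ∀ x y, |convPow (noised μ ρ) n (x, y)| ≤ 1 := fun x y =>
      ((isProb_noised hμ h0 h1).convPow n).abs_le_one (x, y)
    have hN := abs_convPow_mul_le hμ n
    have h := (ih.noisedStep hμ (fun x y => abs_lin_le (hP x y) (hN x y)) h1).add
      (((PSDKernel.of_mul (convPow μ n)).diagStep_sub_indepStep hμ hN).const_mul (sub_nonneg.2 h1))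
    convert h using 3 with x y
    rw [convPow_noised_succ hμ h0 h1, convPow_mul_convPow_succ hμ]
    simp only [noisedStep]
    rw [indepStep_lin hμ hP hN, diagStep_lin hμ hP hN]
    ring

/-- Convexity in the noise parameter, in the sense of kernels. -/
theorem psdKernel_convex_noised (hμ : IsProb μ) {ρ ρ₀ t : ℝ} (h0 : 0 ≤ ρ₀) (h1 : ρ₀ ≤ 1)
    (ht0 : 0 ≤ t) (ht1 : t ≤ 1) (hρ : 1 - ρ = t * (1 - ρ₀)) (n : ℕ) :
    PSDKernel fun x y => 1 * ((1 - t) * (convPow μ n x * convPow μ n y) +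
      t * convPow (noised μ ρ₀) n (x, y)) + (-1) * convPow (noised μ ρ) n (x, y) := by
  have hρ1 : ρ ≤ 1 := by nlinarith
  have hρ0 : 0 ≤ ρ := by nlinarith
  induction n with
  | zero =>
    convert PSDKernel.zero (ι := Γ) using 3 with x y
    rw [convPow_zero_pair (μ := μ), convPow_zero_pair (μ := μ)]
    ring
  | succ n ih =>
    have hP : ∀ x y, |convPow (noised μ ρ) n (x, y)| ≤ 1 := fun x y =>
      ((isProb_noised hμ hρ0 hρ1).convPow n).abs_le_one (x, y)
    have hP' : ∀ x y, |convPow (noised μ ρ₀) n (x, y)| ≤ 1 := fun x y =>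
      ((isProb_noised hμ h0 h1).convPow n).abs_le_one (x, y)
    have hN := abs_convPow_mul_le hμ n
    have hNP := fun x y => abs_lin_le (a := 1 - t) (b := t) (hN x y) (hP' x y)
    have h := (ih.noisedStep hμ (fun x y => abs_lin_le (hNP x y) (hP x y)) hρ1).add
      (((psdKernel_noised_sub hμ h0 h1 n).diagStep_sub_indepStep hμ
        fun x y => abs_lin_le (hP' x y) (hN x y)).const_mul
          (mul_nonneg (sub_nonneg.2 ht1) (sub_nonneg.2 hρ1)))
    convert h using 3 with x y
    rw [convPow_noised_succ hμ hρ0 hρ1, convPow_noised_succ hμ h0 h1, convPow_mul_convPow_succ hμ]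
    simp only [noisedStep]
    rw [indepStep_lin hμ hNP hP, diagStep_lin hμ hNP hP, indepStep_lin hμ hN hP',
      diagStep_lin hμ hN hP', indepStep_lin hμ hP' hN, diagStep_lin hμ hP' hN]
    have : ρ = 1 - t * (1 - ρ₀) := by linarith
    rw [this]
    ring

/-- The deviation from independence on a finite box is controlled by the collision probability. -/
theorem sum_abs_noised_sub_le (hμ : IsProb μ) {ρ : ℝ} (h0 : 1 / 2 ≤ ρ) (h1 : ρ ≤ 1) (n : ℕ)
    (B : Finset Γ) {T : ℝ} (hT : ∑ x ∈ B, convPow (noised μ (1 / 2)) n (x, x) ≤ T) :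
    ∑ p ∈ B ×ˢ B, |convPow (noised μ ρ) n p - convPow μ n p.1 * convPow μ n p.2| ≤
      B.card * (2 * (1 - ρ) * T) := by
  have hK := psdKernel_noised_sub hμ (by linarith : 0 ≤ ρ) h1 n
  have hE := psdKernel_convex_noised hμ (ρ := ρ) (ρ₀ := 1 / 2) (t := 2 * (1 - ρ)) (by norm_num)
    (by norm_num) (by linarith) (by linarith) (by ring) n
  set M := fun x y => 1 * convPow (noised μ ρ) n (x, y) + (-1) * (convPow μ n x * convPow μ n y)
    with hM
  have hd : ∀ x, M x x ≤ 2 * (1 - ρ) * convPow (noised μ (1 / 2)) n (x, x) := fun x => by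
    have h := hE.diag_nonneg x
    have h' : 0 ≤ (convPow μ n x * convPow μ n x) := mul_self_nonneg _
    simp only [hM]
    nlinarith
  calc ∑ p ∈ B ×ˢ B, |convPow (noised μ ρ) n p - convPow μ n p.1 * convPow μ n p.2|
      ≤ ∑ p ∈ B ×ˢ B, Real.sqrt (M p.1 p.1) * Real.sqrt (M p.2 p.2) := by
        refine Finset.sum_le_sum fun p _ => ?_
        rw [← Real.sqrt_mul (hK.diag_nonneg _)]
        refine Real.abs_le_sqrt ?_
        have h := hK.sq_le p.1 p.2
        simp only [hM] at h ⊢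
        calc _ = _ := by ring
          _ ≤ _ := h
    _ = (∑ x ∈ B, Real.sqrt (M x x)) ^ 2 := by
        rw [sq, Finset.sum_mul_sum, Finset.sum_product]
    _ ≤ B.card * ∑ x ∈ B, Real.sqrt (M x x) ^ 2 := sq_sum_le_card_mul_sum_sq
    _ ≤ B.card * ∑ x ∈ B, 2 * (1 - ρ) * convPow (noised μ (1 / 2)) n (x, x) := by
        gcongr with x
        rw [Real.sq_sqrt (hK.diag_nonneg _)]
        exact hd x
    _ ≤ B.card * (2 * (1 - ρ) * T) := by
        rw [← Finset.mul_sum]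
        have : 0 ≤ 2 * (1 - ρ) := by linarith
        gcongr

end KernelComparison

section Structure

open scoped IsMulCommutative

theorem exists_lattice {Γ : Type*} [Group Γ] (hFG : Group.FG Γ) (hVA : VirtAbelian Γ) :
    ∃ Λ : Subgroup Γ, Λ.Normal ∧ Λ.FiniteIndex ∧ IsMulCommutative Λ ∧
      ∃ (J T : Type) (_ : Fintype J) (_ : Group T) (_ : Finite T),
        Nonempty (Λ ≃* (J → Multiplicative ℤ) × T) := by
  obtain ⟨A, hA, hcomm⟩ := hVA
  have : A.FiniteIndex := ⟨hA⟩
  have hc : IsMulCommutative A.normalCore := ⟨⟨fun a b => Subtype.ext <| by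
    have := hcomm ⟨a, A.normalCore_le a.2⟩ ⟨b, A.normalCore_le b.2⟩
    simpa using congrArg Subtype.val this⟩⟩
  obtain ⟨ι, J, _, hJ, p, hp, e, ⟨E⟩⟩ :=
    CommGroup.equiv_free_prod_prod_multiplicative_zmod A.normalCore
  have : ∀ i, NeZero (p i ^ e i) := fun i => ⟨pow_ne_zero _ (hp i).ne_zero⟩
  have : ∀ i, Finite (Multiplicative (ZMod (p i ^ e i))) := fun i =>
    inferInstanceAs (Finite (ZMod (p i ^ e i)))
  exact ⟨A.normalCore, inferInstance, inferInstance, hc, J,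
    (i : ι) → Multiplicative (ZMod (p i ^ e i)), hJ, inferInstance, inferInstance, ⟨E⟩⟩

end Structure

section Reachability

variable {Γ : Type*} [Group Γ] {μ : Γ → ℝ}

/-- Right translation by `g` can be performed in exactly `ℓ` steps of the walk. -/
def Steps (μ : Γ → ℝ) (ℓ : ℕ) (g : Γ) : Prop :=
  ∀ n h, 0 < convPow μ n h → 0 < convPow μ (n + ℓ) (h * g)

theorem Steps.zero_one : Steps μ 0 1 := fun n h hh => by simpa using hh

theorem Steps.mul {ℓ ℓ' : ℕ} {g g' : Γ} (h : Steps μ ℓ g) (h' : Steps μ ℓ' g') :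
    Steps μ (ℓ + ℓ') (g * g') := fun n x hx => by
  have := h' _ _ (h n x hx)
  rwa [mul_assoc, add_assoc] at this

theorem Steps.pow {ℓ : ℕ} {g : Γ} (h : Steps μ ℓ g) (k : ℕ) : Steps μ (k * ℓ) (g ^ k) := by
  induction k with
  | zero => simpa using Steps.zero_one
  | succ k ih => rw [add_mul, one_mul, pow_succ]; exact ih.mul h

theorem Steps.convPow_pos {ℓ : ℕ} {g : Γ} (h : Steps μ ℓ g) : 0 < convPow μ ℓ g := by
  simpa using h 0 1 (by simp [convPow])

theorem exists_steps (hμ : IsProb μ) (hnd : Nondeg μ) (g : Γ) : ∃ ℓ, 0 < ℓ ∧ Steps μ ℓ g := by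
  induction hnd g using Subsemigroup.closure_induction with
  | mem x hx => exact ⟨1, one_pos, fun n h hh => convPow_succ_pos hμ hh hx⟩
  | mul x y _ _ hx hy =>
    obtain ⟨k, hk, hx⟩ := hx
    obtain ⟨l, hl, hy⟩ := hy
    exact ⟨k + l, by omega, hx.mul hy⟩

/-- Powers of finitely many group elements can be reached in a common number of steps. -/
theorem exists_common_steps (hμ : IsProb μ) (hnd : Nondeg μ) {ι : Type*} [Fintype ι] (b : ι → Γ) :
    ∃ q ℓ : ℕ, 0 < q ∧ Steps μ q 1 ∧ Steps μ ℓ 1 ∧ ∀ i, Steps μ ℓ (b i ^ q) := by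
  obtain ⟨q, hq, h1⟩ := exists_steps hμ hnd 1
  choose k _ hk using fun i => exists_steps hμ hnd (b i)
  have hone : ∀ r : ℕ, Steps μ (q * r) 1 := fun r => by
    simpa [mul_comm] using h1.pow r
  refine ⟨q, q * ∑ i, k i, hq, h1, hone _, fun i => ?_⟩
  have := ((hk i).pow q).mul (hone (∑ j ∈ Finset.univ.erase i, k j))
  rwa [mul_one, ← mul_add, Finset.add_sum_erase _ _ (Finset.mem_univ i)] at this

end Reachability

section CentralBinomial

theorem centralBinom_sq_mul_le (n : ℕ) : n.centralBinom ^ 2 * (2 * n + 1) ≤ 4 ^ (2 * n) := by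
  induction n with
  | zero => simp
  | succ n ih =>
    have h := Nat.succ_mul_centralBinom_succ n
    refine Nat.le_of_mul_le_mul_left (?_ : (n + 1) ^ 2 * _ ≤ (n + 1) ^ 2 * _) (by positivity)
    calc (n + 1) ^ 2 * ((n + 1).centralBinom ^ 2 * (2 * (n + 1) + 1))
        = ((n + 1) * (n + 1).centralBinom) ^ 2 * (2 * n + 3) := by ring
      _ = 4 * (2 * n + 1) * (2 * n + 3) * (n.centralBinom ^ 2 * (2 * n + 1)) := by rw [h]; ring
      _ ≤ 4 * (2 * n + 1) * (2 * n + 3) * 4 ^ (2 * n) := by gcongr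
      _ ≤ 16 * (n + 1) ^ 2 * 4 ^ (2 * n) := by gcongr ?_ * _; nlinarith
      _ = (n + 1) ^ 2 * 4 ^ (2 * (n + 1)) := by ring

theorem choose_sq_mul_le (j k : ℕ) : j.choose k ^ 2 * (j + 1) ≤ 4 ^ j := by
  refine (Nat.mul_le_mul_right _ (Nat.pow_le_pow_left (Nat.choose_le_middle k j) 2)).trans ?_
  rcases Nat.even_or_odd' j with ⟨n, rfl | rfl⟩
  · simpa [Nat.centralBinom_eq_two_mul_choose] using centralBinom_sq_mul_le n
  · have h := centralBinom_sq_mul_le (n + 1)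
    have h2 : (n + 1).centralBinom = 2 * (2 * n + 1).choose n := by
      rw [Nat.centralBinom_eq_two_mul_choose, show 2 * (n + 1) = 2 * n + 1 + 1 by ring,
        Nat.choose_succ_succ, ← Nat.choose_symm_half]
      ring
    have h3 : (2 * n + 1) / 2 = n := by omega
    rw [h3]
    rw [h2] at h
    have h4 : (4 : ℕ) ^ (2 * (n + 1)) = 4 * 4 ^ (2 * n + 1) := by ring
    nlinarith [sq_nonneg ((2 * n + 1).choose n)]

theorem choose_div_two_pow_le (j k : ℕ) :
    (j.choose k : ℝ) / 2 ^ j ≤ (Real.sqrt (j + 1))⁻¹ := by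
  have h : ((j.choose k : ℝ)) ^ 2 * (j + 1) ≤ 4 ^ j := by exact_mod_cast choose_sq_mul_le j k
  rw [div_le_iff₀ (by positivity), inv_mul_eq_div, le_div_iff₀ (by positivity)]
  refine le_of_sq_le_sq ?_ (by positivity)
  rw [mul_pow, Real.sq_sqrt (by positivity), ← pow_mul, mul_comm j, pow_mul]
  norm_num
  exact h

end CentralBinomial

section Decay

open scoped ENNReal

theorem inv_sqrt_add_one_le {τ : ℝ} (hτ : 1 ≤ τ) :
    (Real.sqrt (τ + 1))⁻¹ ≤ (1 - 1 / (4 * τ)) * (Real.sqrt τ)⁻¹ := by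
  have h0 : 0 < τ := by linarith
  have h1 : 0 ≤ 1 - 1 / (4 * τ) := by
    rw [sub_nonneg, div_le_one (by positivity)]; linarith
  rw [← div_eq_mul_inv, inv_eq_one_div, div_le_div_iff₀ (by positivity) (by positivity), one_mul]
  refine le_of_sq_le_sq ?_ (by positivity)
  rw [mul_pow, Real.sq_sqrt h0.le, Real.sq_sqrt (by linarith)]
  have h2 : (1 - 1 / (4 * τ)) ^ 2 * (τ + 1) - τ = ((τ - 1) * 8 * τ + τ + 1) / (16 * τ ^ 2) := by
    field_simp
    ring
  have h3 : 0 ≤ ((τ - 1) * 8 * τ + τ + 1) / (16 * τ ^ 2) := by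
    have : 0 ≤ τ - 1 := by linarith
    positivity
  linarith

theorem le_inv_sqrt_add {τ a : ℝ} (hτ : 0 < τ) (ha : 0 ≤ a) (haτ : a ≤ τ) :
    (1 - a / τ) * (Real.sqrt τ)⁻¹ ≤ (Real.sqrt (τ + a))⁻¹ := by
  have h1 : 0 ≤ 1 - a / τ := by rw [sub_nonneg, div_le_one hτ]; exact haτ
  rw [← div_eq_mul_inv, inv_eq_one_div, div_le_div_iff₀ (by positivity) (by positivity), one_mul]
  refine le_of_sq_le_sq ?_ (by positivity)
  rw [mul_pow, Real.sq_sqrt hτ.le, Real.sq_sqrt (by linarith)]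
  have h2 : τ - (1 - a / τ) ^ 2 * (τ + a) = a * (τ ^ 2 + (τ - a) * a) / τ ^ 2 := by
    field_simp
    ring
  have h3 : 0 ≤ a * (τ ^ 2 + (τ - a) * a) / τ ^ 2 := by
    have : 0 ≤ τ - a := by linarith
    positivity
  linarith

/-- The function `τ ↦ τ ^ (-m/2)` is a supersolution of the comparison recursion. -/
theorem exists_supersolution (m : ℕ) {c : ℝ} (hc : 0 < c) (hc1 : c ≤ 1) :
    ∃ a : ℝ, 0 < a ∧ a ≤ 1 ∧ ∀ τ : ℝ, 1 ≤ τ →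
      c * (Real.sqrt (τ + 1))⁻¹ ^ m + (1 - c) * (Real.sqrt τ)⁻¹ ^ m ≤
        (Real.sqrt (τ + a))⁻¹ ^ m := by
  refine ⟨c / (4 * (m + 1)), by positivity, ?_, fun τ hτ => ?_⟩
  · rw [div_le_one (by positivity)]
    have : (0 : ℝ) ≤ m := m.cast_nonneg
    linarith
  rcases m with - | m
  · simp
  set a := c / (4 * ((m + 1 : ℕ) + 1) : ℝ) with ha
  have hm0 : (0 : ℝ) ≤ m := m.cast_nonneg
  have h0 : 0 < τ := by linarith
  have ha0 : 0 ≤ a := by positivity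
  have ha1 : a ≤ 1 := by
    rw [ha, div_le_one (by positivity)]
    push_cast
    linarith
  have hma : (m + 1) * a ≤ c / 4 := by
    have : a * (4 * (m + 2)) = c := by
      rw [ha]; push_cast; field_simp; ring
    nlinarith
  have haτ : a ≤ τ := by linarith
  have hv : 0 ≤ 1 - 1 / (4 * τ) := by
    rw [sub_nonneg, div_le_one (by positivity)]; linarith
  have h1 : (Real.sqrt (τ + 1))⁻¹ ^ (m + 1) ≤ (1 - 1 / (4 * τ)) * (Real.sqrt τ)⁻¹ ^ (m + 1) := by
    calc _ ≤ ((1 - 1 / (4 * τ)) * (Real.sqrt τ)⁻¹) ^ (m + 1) := by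
          gcongr
          exact inv_sqrt_add_one_le hτ
      _ ≤ _ := by
          rw [mul_pow]
          gcongr
          exact pow_le_of_le_one hv (by rw [sub_le_self_iff]; positivity) m.succ_ne_zero
  have h2 : (1 - c / (4 * τ)) * (Real.sqrt τ)⁻¹ ^ (m + 1) ≤ (Real.sqrt (τ + a))⁻¹ ^ (m + 1) := by
    have hb : 0 ≤ 1 - a / τ := by rw [sub_nonneg, div_le_one h0]; exact haτ
    calc _ ≤ ((1 - a / τ) * (Real.sqrt τ)⁻¹) ^ (m + 1) := by
          rw [mul_pow]
          gcongr
          have hB := one_add_mul_le_pow (a := -(a / τ)) (by linarith) (m + 1)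
          rw [← sub_eq_add_neg] at hB
          refine le_trans ?_ hB
          have : (m + 1) * (a / τ) ≤ c / (4 * τ) := by
            rw [← mul_div_assoc, ← div_div]
            gcongr
          push_cast
          linarith
      _ ≤ _ := by
          gcongr
          exact le_inv_sqrt_add h0 ha0 haτ
  refine le_trans ?_ h2
  have h3 := mul_le_mul_of_nonneg_left h1 hc.le
  have h4 : c / (4 * τ) = c * (1 / (4 * τ)) := by ring
  rw [h4]
  linarith

/-- Comparison of a Markov operator `T` with a commuting operator `Z` that it dominates. -/
theorem exists_iterate_decay {X : Type*} (T Z : (X → ℝ≥0∞) → X → ℝ≥0∞) (D : X → ℝ≥0∞) (m : ℕ)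
    {c : ℝ} (hc : 0 < c) (hc1 : c ≤ 1)
    (hTZ : ∀ (F : X → ℝ≥0∞) (α β : ℝ), 0 ≤ α → 0 ≤ β → (∀ x, Z F x ≤ ENNReal.ofReal α) →
      (∀ x, F x ≤ ENNReal.ofReal β) → ∀ x, T F x ≤ ENNReal.ofReal (c * α + (1 - c) * β))
    (hcomm : ∀ F, Z (T F) = T (Z F))
    (hD : ∀ (j : ℕ) x, Z^[j] D x ≤ ENNReal.ofReal ((Real.sqrt (j + 1))⁻¹ ^ m)) :
    ∃ a : ℝ, 0 < a ∧ a ≤ 1 ∧ ∀ (k : ℕ) x,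
      T^[k] D x ≤ ENNReal.ofReal ((Real.sqrt (1 + a * k))⁻¹ ^ m) := by
  obtain ⟨a, ha, ha1, hsup⟩ := exists_supersolution m hc hc1
  refine ⟨a, ha, ha1, ?_⟩
  suffices h : ∀ (k j : ℕ) x, T^[k] (Z^[j] D) x ≤
      ENNReal.ofReal ((Real.sqrt (j + 1 + a * k))⁻¹ ^ m) from fun k x => by
    simpa using h k 0 x
  intro k
  induction k with
  | zero => simpa using hD
  | succ k ih =>
    intro j x
    have hZ : ∀ x, Z (T^[k] (Z^[j] D)) x ≤
        ENNReal.ofReal ((Real.sqrt ((j + 1 : ℕ) + 1 + a * k))⁻¹ ^ m) := fun x => by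
      have := ih (j + 1) x
      rwa [Function.iterate_succ_apply', (Function.Commute.iterate_right
        (f := Z) (g := T) hcomm k : Function.Commute Z T^[k]).eq] at *
    rw [Function.iterate_succ_apply']
    refine (hTZ _ _ _ (by positivity) (by positivity) hZ (ih j) x).trans
      (ENNReal.ofReal_le_ofReal ?_)
    have hτ : (1 : ℝ) ≤ j + 1 + a * k := by
      have : (0 : ℝ) ≤ j := j.cast_nonneg
      have : 0 ≤ a * k := by positivity
      linarith
    have := hsup _ hτ
    convert this using 4 <;> push_cast <;> ring_nf

end Decay

section AlgebraAction

open scoped ENNReal NNReal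

variable {A G : Type*} [Monoid A] [Group G] (φ : A →* G)

/-- Right translations, as linear operators on functions. -/
noncomputable def rightTranslation : A →* Module.End ℝ≥0 (G → ℝ≥0∞) where
  toFun u :=
    { toFun := fun F x => F (x * φ u)
      map_add' := fun _ _ => rfl
      map_smul' := fun _ _ => rfl }
  map_one' := by ext F x; simp
  map_mul' u v := by ext F x; simp [mul_assoc]

/-- The averaging operators attached to elements of a monoid algebra. -/
noncomputable def act : MonoidAlgebra ℝ≥0 A →ₐ[ℝ≥0] Module.End ℝ≥0 (G → ℝ≥0∞) :=
  MonoidAlgebra.lift ℝ≥0 _ A (rightTranslation φ)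

theorem act_apply (z : MonoidAlgebra ℝ≥0 A) (F : G → ℝ≥0∞) (x : G) :
    act φ z F x = ∑ u ∈ z.coeff.support, (z.coeff u : ℝ≥0∞) * F (x * φ u) := by
  rw [act, MonoidAlgebra.lift_apply, Finsupp.sum, LinearMap.sum_apply, Finset.sum_apply]
  rfl

theorem act_single (u : A) (F : G → ℝ≥0∞) (x : G) :
    act φ (MonoidAlgebra.single u 1) F x = F (x * φ u) := by
  rw [act, MonoidAlgebra.lift_single, one_smul]
  rfl

theorem act_mono (z : MonoidAlgebra ℝ≥0 A) {F F' : G → ℝ≥0∞} (h : ∀ x, F x ≤ F' x) (x : G) :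
    act φ z F x ≤ act φ z F' x := by
  rw [act_apply, act_apply]
  gcongr
  exact h _

theorem act_comp_mul_right {z : MonoidAlgebra ℝ≥0 A} {σ : A →* A} {g : G}
    (hσ : ∀ u, φ (σ u) = g * φ u * g⁻¹) (hz : MonoidAlgebra.mapDomain σ z = z)
    (F : G → ℝ≥0∞) (x : G) : act φ z F (x * g) = act φ z (fun y => F (y * g)) x := by
  have h : ∀ z : MonoidAlgebra ℝ≥0 A,
      act φ z F (x * g) = act φ (MonoidAlgebra.mapDomain σ z) (fun y => F (y * g)) x := by
    intro z
    induction z using MonoidAlgebra.induction_on with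
    | of u =>
      rw [MonoidAlgebra.of_apply, MonoidAlgebra.mapDomain_single, act_single, act_single, hσ]
      simp [mul_assoc]
    | add z z' hz hz' =>
      rw [MonoidAlgebra.mapDomain_add, map_add, map_add]
      exact congrArg₂ (· + ·) hz hz'
    | smul r z hz =>
      rw [MonoidAlgebra.mapDomain_smul, map_smul, map_smul]
      exact congrArg (r • ·) hz
  rw [h, hz]

theorem act_avg_comm {z : MonoidAlgebra ℝ≥0 A}
    (hz : ∀ g (F : G → ℝ≥0∞) x, act φ z F (x * g) = act φ z (fun y => F (y * g)) x) (w : G → ℝ)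
    (F : G → ℝ≥0∞) : act φ z (avg w F) = avg w (act φ z F) := by
  ext x
  simp only [avg, hz]
  rw [act_apply]
  simp only [act_apply, Finset.mul_sum]
  rw [Summable.tsum_finsetSum fun _ _ => ENNReal.summable]
  refine Finset.sum_congr rfl fun u _ => ?_
  rw [avg, ← ENNReal.tsum_mul_left]
  exact tsum_congr fun s => by ring

/-- A nonnegative element of total mass one. -/
def IsMarkov (z : MonoidAlgebra ℝ≥0 A) : Prop := act φ z (fun _ => 1) = fun _ => 1

variable {φ}

theorem IsMarkov.sum_eq_one {z : MonoidAlgebra ℝ≥0 A} (hz : IsMarkov φ z) :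
    ∑ u ∈ z.coeff.support, (z.coeff u : ℝ≥0∞) = 1 := by
  have := congrFun hz 1
  rw [act_apply] at this
  simpa using this

theorem IsMarkov.act_le {z : MonoidAlgebra ℝ≥0 A} (hz : IsMarkov φ z) {F : G → ℝ≥0∞} {c : ℝ≥0∞}
    (h : ∀ x, F x ≤ c) (x : G) : act φ z F x ≤ c := by
  refine (act_mono φ z h x).trans_eq ?_
  rw [act_apply, ← Finset.sum_mul, hz.sum_eq_one, one_mul]

theorem IsMarkov.one : IsMarkov φ 1 := by
  rw [IsMarkov, map_one]
  rfl

theorem IsMarkov.mul {z z' : MonoidAlgebra ℝ≥0 A} (hz : IsMarkov φ z) (hz' : IsMarkov φ z') :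
    IsMarkov φ (z * z') := by
  rw [IsMarkov, map_mul, Module.End.mul_apply, hz', hz]

theorem IsMarkov.pow {z : MonoidAlgebra ℝ≥0 A} (hz : IsMarkov φ z) (j : ℕ) :
    IsMarkov φ (z ^ j) := by
  induction j with
  | zero => simpa using IsMarkov.one
  | succ j ih => exact pow_succ z j ▸ ih.mul hz

/-- The element `(1 + a) / 2` of the monoid algebra. -/
noncomputable def lazy (a : A) : MonoidAlgebra ℝ≥0 A :=
  (2⁻¹ : ℝ≥0) • (1 + MonoidAlgebra.single a 1)

theorem IsMarkov.lazy (a : A) : IsMarkov φ (lazy a) := by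
  ext x
  rw [NSVA.lazy, map_smul, map_add, map_one]
  change (2⁻¹ : ℝ≥0) • ((1 : ℝ≥0∞) + act φ (MonoidAlgebra.single a 1) (fun _ => 1) x) = 1
  rw [act_single, ENNReal.smul_def, smul_eq_mul, one_add_one_eq_two, ENNReal.coe_inv two_ne_zero]
  exact ENNReal.inv_mul_cancel (by simp) (by simp)

theorem mapDomain_lazy {B : Type*} [Monoid B] (σ : A →* B) (a : A) :
    MonoidAlgebra.mapDomain σ (lazy a) = lazy (σ a) := by
  rw [lazy, lazy, MonoidAlgebra.mapDomain_smul, MonoidAlgebra.mapDomain_add,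
    MonoidAlgebra.mapDomain_single, MonoidAlgebra.one_def, MonoidAlgebra.mapDomain_single, map_one,
    MonoidAlgebra.one_def]

theorem eq_one_or_eq_of_mem_support_lazy {a u : A} (hu : u ∈ (lazy a).coeff.support) :
    u = 1 ∨ u = a := by
  by_contra! h
  rw [Finsupp.mem_support_iff] at hu
  refine hu ?_
  simp [lazy, MonoidAlgebra.one_def, h.1.symm, h.2.symm]

end AlgebraAction

section CommAction

open scoped ENNReal NNReal

variable {A G : Type*} [CommMonoid A] [Group G] {φ : A →* G}

theorem IsMarkov.prod {ι : Type*} (s : Finset ι) {z : ι → MonoidAlgebra ℝ≥0 A}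
    (hz : ∀ i ∈ s, IsMarkov φ (z i)) : IsMarkov φ (∏ i ∈ s, z i) :=
  Finset.prod_induction _ _ (fun _ _ h h' => h.mul h') IsMarkov.one hz

theorem lazy_pow (a : A) (j : ℕ) : lazy a ^ j = ∑ k ∈ Finset.range (j + 1),
    ((j.choose k : ℝ≥0) / 2 ^ j) • MonoidAlgebra.single (a ^ k) 1 := by
  rw [lazy, smul_pow, add_comm, add_pow, Finset.smul_sum]
  refine Finset.sum_congr rfl fun k _ => ?_
  rw [one_pow, mul_one, MonoidAlgebra.single_pow, one_pow, ← nsmul_eq_mul',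
    ← Nat.cast_smul_eq_nsmul ℝ≥0, smul_smul]
  congr 1
  rw [inv_pow, div_eq_inv_mul]

theorem act_prod_le {ι : Type*} (s : Finset ι) {z z' : ι → MonoidAlgebra ℝ≥0 A}
    (h : ∀ i F x, act φ (z i) F x ≤ act φ (z' i) F x) (F : G → ℝ≥0∞) (x : G) :
    act φ (∏ i ∈ s, z i) F x ≤ act φ (∏ i ∈ s, z' i) F x := by
  refine Finset.prod_hom_rel
    (r := fun u v => ∀ F x, act φ u F x ≤ act φ v F x) (fun _ _ => le_rfl) ?_ F x
  intro i u v huv F x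
  rw [map_mul, map_mul]
  exact (h i _ x).trans (act_mono φ _ (huv F) x)

theorem act_lazy_pow_le (a : A) (j : ℕ) {w : ℝ≥0} (hw : ∀ k, (j.choose k : ℝ≥0) / 2 ^ j ≤ w)
    (F : G → ℝ≥0∞) (x : G) : act φ (lazy a ^ j) F x ≤
      act φ (w • ∑ k ∈ Finset.range (j + 1), MonoidAlgebra.single (a ^ k) 1) F x := by
  rw [lazy_pow, Finset.smul_sum, map_sum, map_sum, LinearMap.sum_apply, LinearMap.sum_apply,
    Finset.sum_apply, Finset.sum_apply]
  refine Finset.sum_le_sum fun k _ => ?_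
  rw [map_smul, map_smul]
  change (_ : ℝ≥0) • act φ _ F x ≤ w • act φ _ F x
  rw [ENNReal.smul_def, ENNReal.smul_def]
  gcongr
  exact hw k

/-- A set met at most once by every orbit has small mass after lazy steps in `m` independent
directions. -/
theorem act_prod_lazy_pow_le {J : Type*} [Fintype J] {a : J → A}
    (ha : Function.Injective fun κ : J → ℕ => ∏ i, a i ^ κ i) {E : Set G}
    (hE : ∀ x u v, x * φ u ∈ E → x * φ v ∈ E → u = v) (j : ℕ) {w : ℝ≥0}
    (hw : ∀ k, (j.choose k : ℝ≥0) / 2 ^ j ≤ w) (x : G) :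
    act φ ((∏ i, lazy (a i)) ^ j) (E.indicator fun _ => 1) x ≤
      ((w ^ Fintype.card J : ℝ≥0) : ℝ≥0∞) := by
  rw [← Finset.prod_pow]
  refine (act_prod_le _ (fun i => act_lazy_pow_le (a i) j hw) _ x).trans ?_
  have hprod : ∏ i, w • ∑ k ∈ Finset.range (j + 1), MonoidAlgebra.single (a i ^ k) (1 : ℝ≥0) =
      w ^ Fintype.card J • ∑ κ ∈ Fintype.piFinset fun _ : J => Finset.range (j + 1),
        MonoidAlgebra.single (∏ i, a i ^ κ i) 1 := by
    rw [Finset.prod_smul, Finset.prod_const, Finset.card_univ, Finset.prod_univ_sum]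
    congr 1
    exact Finset.sum_congr rfl fun κ _ => by simp [MonoidAlgebra.prod_single]
  rw [hprod, map_smul, map_sum]
  change (_ : ℝ≥0) • (∑ κ ∈ _, _ : Module.End ℝ≥0 (G → ℝ≥0∞)) _ x ≤ _
  rw [ENNReal.smul_def, smul_eq_mul]
  refine mul_le_of_le_one_right' ?_
  rw [LinearMap.sum_apply, Finset.sum_apply]
  simp only [act_single]
  by_cases h : ∃ κ : J → ℕ, x * φ (∏ i, a i ^ κ i) ∈ E
  · obtain ⟨κ, hκ⟩ := h
    refine (Finset.sum_le_sum (g := fun κ' => if κ' = κ then (1 : ℝ≥0∞) else 0)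
      fun κ' _ => ?_).trans ?_
    · split_ifs with h
      · exact Set.indicator_apply_le fun _ => le_rfl
      · rw [Set.indicator_of_notMem]
        exact fun h' => h (ha (hE x _ _ h' hκ))
    · rw [Finset.sum_ite_eq']
      split_ifs <;> simp
  · push Not at h
    simp [h]

end CommAction

section Domination

open scoped ENNReal NNReal

theorem exists_pos_le_of_finset {ι : Type*} (s : Finset ι) {f : ι → ℝ} (hf : ∀ i ∈ s, 0 < f i) :
    ∃ c : ℝ, 0 < c ∧ c ≤ 1 ∧ ∀ i ∈ s, c ≤ f i := by
  induction s using Finset.induction_on with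
  | empty => exact ⟨1, one_pos, le_rfl, by simp⟩
  | insert a s _ ih =>
    obtain ⟨c, hc, hc1, h⟩ := ih fun i hi => hf i (Finset.mem_insert_of_mem hi)
    refine ⟨min c (f a), lt_min hc (hf a (Finset.mem_insert_self a s)),
      (min_le_left _ _).trans hc1, fun i hi => ?_⟩
    rcases Finset.mem_insert.1 hi with rfl | hi
    · exact min_le_right _ _
    · exact (min_le_left _ _).trans (h i hi)

theorem exists_domination {A G : Type*} [Monoid A] [Group G] {φ : A →* G}
    (hφ : Function.Injective φ) {w : G → ℝ} (hw : IsProb w) {z : MonoidAlgebra ℝ≥0 A}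
    (hz : IsMarkov φ z) {L : ℕ} (hL : ∀ u ∈ z.coeff.support, 0 < convPow w L (φ u)) :
    ∃ c : ℝ, 0 < c ∧ c ≤ 1 ∧ ∀ (F : G → ℝ≥0∞) (α β : ℝ), 0 ≤ α → 0 ≤ β →
      (∀ x, act φ z F x ≤ ENNReal.ofReal α) → (∀ x, F x ≤ ENNReal.ofReal β) →
        ∀ x, (avg w)^[L] F x ≤ ENNReal.ofReal (c * α + (1 - c) * β) := by
  have hzpos : ∀ u ∈ z.coeff.support, (0 : ℝ) < z.coeff u := fun u hu =>
    NNReal.coe_pos.2 (pos_iff_ne_zero.2 (Finsupp.mem_support_iff.1 hu))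
  obtain ⟨c, hc, hc1, h⟩ := exists_pos_le_of_finset z.coeff.support
    (f := fun u => convPow w L (φ u) / z.coeff u) fun u hu => div_pos (hL u hu) (hzpos u hu)
  refine ⟨c, hc, hc1, ?_⟩
  set p : G → ℝ≥0∞ := fun g => ENNReal.ofReal (convPow w L g) with hp
  set q : G → ℝ≥0∞ := fun g => ∑ u ∈ z.coeff.support,
    if g = φ u then ENNReal.ofReal c * z.coeff u else 0 with hq
  have hqp : ∀ g, q g ≤ p g := by
    intro g
    by_cases hg : ∃ u ∈ z.coeff.support, g = φ u
    · obtain ⟨u, hu, rfl⟩ := hg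
      simp only [hq, hφ.eq_iff]
      rw [Finset.sum_ite_eq, if_pos hu, hp, ← ENNReal.ofReal_coe_nnreal,
        ← ENNReal.ofReal_mul hc.le]
      exact ENNReal.ofReal_le_ofReal ((le_div_iff₀ (hzpos u hu)).1 (h u hu))
    · push Not at hg
      simp only [hq]
      rw [Finset.sum_eq_zero fun u hu => if_neg (hg u hu)]
      exact zero_le
  have hsplit : ∀ F x, (avg w)^[L] F x =
      ENNReal.ofReal c * act φ z F x + ∑' g, (p g - q g) * F (x * g) := by
    intro F x
    have h1 : ∑' g, q g * F (x * g) = ENNReal.ofReal c * act φ z F x := by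
      simp only [hq, Finset.sum_mul, act_apply, Finset.mul_sum]
      rw [Summable.tsum_finsetSum fun _ _ => ENNReal.summable]
      refine Finset.sum_congr rfl fun u _ => ?_
      rw [tsum_eq_single (φ u) fun g hg => by rw [if_neg hg, zero_mul], if_pos rfl, mul_assoc]
    rw [← h1, ← ENNReal.tsum_add, ← tsum_convPow_mul hw]
    refine tsum_congr fun g => ?_
    rw [← add_mul, add_tsub_cancel_of_le (hqp g)]
  have hr : ∑' g, (p g - q g) = ENNReal.ofReal (1 - c) := by
    have h1 := hsplit (fun _ => 1) 1
    rw [hz, ← tsum_convPow_mul hw] at h1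
    simp only [mul_one, (hw.convPow L).tsum_ofReal] at h1
    rw [ENNReal.ofReal_sub 1 hc.le, ENNReal.ofReal_one, h1,
      ENNReal.add_sub_cancel_left ENNReal.ofReal_ne_top]
  intro F α β hα hβ hZ hF x
  rw [hsplit, ENNReal.ofReal_add (by positivity) (mul_nonneg (by linarith) hβ),
    ENNReal.ofReal_mul hc.le, ENNReal.ofReal_mul (by linarith), ← hr, ← ENNReal.tsum_mul_right]
  gcongr
  · exact hZ x
  · exact hF _

end Domination

section ConjugationInvariance

open scoped IsMulCommutative ENNReal NNReal

variable {Γ : Type*} [Group Γ] {Λ : Subgroup Γ} [Λ.Normal] [IsMulCommutative Λ]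

theorem conjNormal_congr {g g' : Γ} (h : (g : Γ ⧸ Λ) = g') (b : Λ) :
    MulAut.conjNormal g b = MulAut.conjNormal g' b := by
  obtain ⟨l, hl, rfl⟩ : ∃ l ∈ Λ, g' = g * l := ⟨g⁻¹ * g', QuotientGroup.eq.1 h, by simp⟩
  have hc : l * b * l⁻¹ = b := by
    have := congrArg Subtype.val (mul_comm (⟨l, hl⟩ : Λ) b)
    simp only [Subgroup.coe_mul] at this
    rw [this, mul_inv_cancel_right]
  ext
  rw [MulAut.conjNormal_apply, MulAut.conjNormal_apply]
  conv_lhs => rw [← hc]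
  group

variable [Fintype (Γ ⧸ Λ)]

/-- The product of the lazy steps along all conjugates of `b`. -/
noncomputable def conjLazy (b : Λ) : MonoidAlgebra ℝ≥0 Λ :=
  ∏ f : Γ ⧸ Λ, lazy (MulAut.conjNormal f.out b)

theorem mapDomain_prod_conjLazy {J : Type*} [Fintype J] (b : J → Λ) (g : Γ) :
    MonoidAlgebra.mapDomain (MulAut.conjNormal g : MulAut Λ) (∏ i, conjLazy (b i)) =
      ∏ i, conjLazy (b i) := by
  change MonoidAlgebra.mapDomainRingHom ℝ≥0
    ((MulAut.conjNormal g : MulAut Λ) : Λ →* Λ) (∏ i, conjLazy (b i)) = _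
  rw [map_prod]
  refine Finset.prod_congr rfl fun i _ => ?_
  rw [conjLazy, map_prod]
  refine Fintype.prod_equiv (MulAction.toPerm g : Equiv.Perm (Γ ⧸ Λ)) _ _ fun f => ?_
  refine (mapDomain_lazy _ _).trans (congrArg lazy ?_)
  change (MulAut.conjNormal g * MulAut.conjNormal f.out : MulAut Λ) (b i) = _
  rw [← map_mul]
  refine conjNormal_congr ?_ (b i)
  rw [MulAction.toPerm_apply, QuotientGroup.out_eq']
  conv_rhs => rw [← QuotientGroup.out_eq' f]
  rfl

theorem conjLazy_eq_mul (b : Λ) :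
    conjLazy b = (∏ f ∈ Finset.univ.erase (1 : Γ ⧸ Λ), lazy (MulAut.conjNormal f.out b)) *
      lazy b := by
  rw [conjLazy, ← Finset.prod_erase_mul _ _ (Finset.mem_univ (1 : Γ ⧸ Λ))]
  congr 2
  have h : (((1 : Γ ⧸ Λ).out : Γ) : Γ ⧸ Λ) = ((1 : Γ) : Γ ⧸ Λ) := QuotientGroup.out_eq' _
  rw [conjNormal_congr h, map_one, MulAut.one_apply]

/-- The embedding of `Λ` in the first factor of `Γ × Γ`. -/
def firstFactor (Λ : Subgroup Γ) : Λ →* Γ × Γ := (MonoidHom.inl Γ Γ).comp Λ.subtype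

omit [Λ.Normal] [IsMulCommutative Λ] [Fintype (Γ ⧸ Λ)] in
theorem firstFactor_injective : Function.Injective (firstFactor Λ) := fun _ _ h =>
  Subtype.ext (congrArg Prod.fst h)

omit [Λ.Normal] [Fintype (Γ ⧸ Λ)] in
theorem steps_of_mem_support_prod {μ : Γ → ℝ} {ι : Type*} (s : Finset ι)
    {z : ι → MonoidAlgebra ℝ≥0 Λ} {ℓ : ℕ}
    (hz : ∀ i ∈ s, ∀ u ∈ (z i).coeff.support, Steps μ ℓ (u : Γ)) {u : Λ}
    (hu : u ∈ (∏ i ∈ s, z i).coeff.support) : Steps μ (s.card * ℓ) (u : Γ) := by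
  induction s using Finset.induction_on generalizing u with
  | empty =>
    have : u = 1 := by simpa [MonoidAlgebra.one_def] using hu
    simpa [this] using Steps.zero_one
  | insert i s his ih =>
    rw [Finset.prod_insert his] at hu
    obtain ⟨v, hv, w, hw, rfl⟩ := Finset.mem_mul.1 (MonoidAlgebra.support_coeff_mul_subset _ _ hu)
    have := (hz i (Finset.mem_insert_self i s) v hv).mul
      (ih (fun j hj => hz j (Finset.mem_insert_of_mem hj)) hw)
    rw [Finset.card_insert_of_notMem his, add_mul, one_mul, add_comm]
    exact this

theorem conjLazy_steps {μ : Γ → ℝ} {J : Type*} [Fintype J] {b : J → Λ} {ℓ : ℕ}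
    (h1 : Steps μ ℓ 1) (hb : ∀ i (f : Γ ⧸ Λ), Steps μ ℓ (MulAut.conjNormal f.out (b i) : Λ)) :
    ∃ L, Steps μ L 1 ∧ ∀ u ∈ (∏ i, conjLazy (b i)).coeff.support, Steps μ L (u : Γ) := by
  refine ⟨Fintype.card J * (Fintype.card (Γ ⧸ Λ) * ℓ), ?_, fun u hu => ?_⟩
  · simpa using (h1.pow (Fintype.card (Γ ⧸ Λ))).pow (Fintype.card J)
  · refine steps_of_mem_support_prod Finset.univ (fun i _ u hu => ?_) hu
    refine steps_of_mem_support_prod Finset.univ (fun f _ u hu => ?_) hu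
    rcases eq_one_or_eq_of_mem_support_lazy hu with rfl | rfl
    · exact h1
    · exact hb i f

end ConjugationInvariance

section DiagonalDecay

open scoped IsMulCommutative ENNReal NNReal

variable {Γ : Type*} [Group Γ] {Λ : Subgroup Γ} [Λ.Normal] [IsMulCommutative Λ]
  [Fintype (Γ ⧸ Λ)] {μ : Γ → ℝ}

theorem act_firstFactor_prod_conjLazy_comm {J : Type*} [Fintype J] (b : J → Λ) (w : Γ × Γ → ℝ)
    (F : Γ × Γ → ℝ≥0∞) : act (firstFactor Λ) (∏ i, conjLazy (b i)) (avg w F) =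
      avg w (act (firstFactor Λ) (∏ i, conjLazy (b i)) F) := by
  refine act_avg_comm _ (fun g F x => act_comp_mul_right _ (σ := (MulAut.conjNormal g.1 : MulAut Λ))
    (fun u => ?_) (mapDomain_prod_conjLazy b g.1) F x) w F
  refine Prod.ext ?_ ?_
  · simp [firstFactor]
  · simp [firstFactor]

theorem act_firstFactor_prod_conjLazy_pow_le {J : Type*} [Fintype J] {b : J → Λ}
    (hb : Function.Injective fun κ : J → ℕ => ∏ i, b i ^ κ i) (j : ℕ) (x : Γ × Γ) :
    act (firstFactor Λ) ((∏ i, conjLazy (b i)) ^ j)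
        ({p : Γ × Γ | p.1 = p.2}.indicator fun _ => 1) x ≤
      ENNReal.ofReal ((√(j + 1))⁻¹ ^ Fintype.card J) := by
  simp only [conjLazy_eq_mul]
  rw [Finset.prod_mul_distrib, mul_pow, map_mul, Module.End.mul_apply]
  refine IsMarkov.act_le (IsMarkov.pow (IsMarkov.prod _ fun i _ => IsMarkov.prod _
    fun f _ => IsMarkov.lazy _) j) (fun y => ?_) x
  refine (act_prod_lazy_pow_le hb (fun y u v hu hv => ?_) j
    (w := (√(j + 1))⁻¹.toNNReal) (fun k => ?_) y).trans_eq ?_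
  · simp only [Set.mem_ofPred_eq, firstFactor, MonoidHom.comp_apply, MonoidHom.inl_apply,
      Prod.fst_mul, Prod.snd_mul, mul_one] at hu hv
    exact Subtype.ext (mul_left_cancel (hu.trans hv.symm))
  · rw [← NNReal.coe_le_coe, Real.coe_toNNReal _ (by positivity)]
    simpa using choose_div_two_pow_le j k
  · rw [ENNReal.ofReal, Real.toNNReal_pow (by positivity)]

theorem sum_diagonal_le (hμ : IsProb μ) (n : ℕ) {t : ℝ} (ht : 0 ≤ t)
    (h : (avg (noised μ (1 / 2)))^[n] ({p : Γ × Γ | p.1 = p.2}.indicator fun _ => 1) 1 ≤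
      ENNReal.ofReal t) (B : Finset Γ) :
    ∑ x ∈ B, convPow (noised μ (1 / 2)) n (x, x) ≤ t := by
  have hν : IsProb (noised μ (1 / 2)) := isProb_noised hμ (by norm_num) (by norm_num)
  rw [← ENNReal.ofReal_le_ofReal_iff ht,
    ENNReal.ofReal_sum_of_nonneg fun x _ => (hν.convPow n).1 _]
  refine le_trans ?_ h
  rw [← tsum_convPow_mul_one hν]
  refine le_trans (le_of_eq ?_)
    (ENNReal.sum_le_tsum (B.map ⟨fun x => (x, x), fun x y h => congrArg Prod.fst h⟩))
  rw [Finset.sum_map]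
  exact Finset.sum_congr rfl fun x _ => by
    rw [Set.indicator_of_mem (by rfl), mul_one]
    rfl

/-- The diagonal has mass of order `n ^ (-m / 2)` for the noised walk with `ρ = 1 / 2`. -/
theorem exists_diagonal_decay (hμ : IsProb μ) (hnd : Nondeg μ) {J T : Type*} [Fintype J] [Group T]
    (E : Λ ≃* (J → Multiplicative ℤ) × T) :
    ∃ C : ℝ, 0 ≤ C ∧ ∀ n : ℕ, 1 ≤ n → ∀ B : Finset Γ,
      ∑ x ∈ B, convPow (noised μ (1 / 2)) n (x, x) ≤ C * (√n)⁻¹ ^ Fintype.card J := by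
  have hν : IsProb (noised μ (1 / 2)) := isProb_noised hμ (by norm_num) (by norm_num)
  set ν := noised μ (1 / 2)
  set D : Γ × Γ → ℝ≥0∞ := {p : Γ × Γ | p.1 = p.2}.indicator fun _ => 1
  let b₀ : J → Λ := fun i => E.symm (Pi.mulSingle i (Multiplicative.ofAdd 1), 1)
  obtain ⟨q, ℓ, hq, hq1, hℓ1, hℓ⟩ := exists_common_steps hμ hnd
    fun p : J × (Γ ⧸ Λ) => ((MulAut.conjNormal p.2.out (b₀ p.1) : Λ) : Γ)
  let b : J → Λ := fun i => b₀ i ^ q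
  have hb : Function.Injective fun κ : J → ℕ => ∏ i, b i ^ κ i := by
    intro κ κ' h
    let p : Λ →* (J → Multiplicative ℤ) := (MonoidHom.fst _ T).comp E.toMonoidHom
    have hp : ∀ κ : J → ℕ, p (∏ i, b i ^ κ i) = fun i => Multiplicative.ofAdd (q * κ i : ℤ) := by
      intro κ
      rw [map_prod, ← Finset.univ_prod_mulSingle (fun i => Multiplicative.ofAdd (q * κ i : ℤ))]
      refine Finset.prod_congr rfl fun i _ => ?_
      simp only [p, b, b₀, map_pow, ← pow_mul, MonoidHom.comp_apply]
      have hE : (MonoidHom.fst _ T) (E.toMonoidHom (E.symm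
          (Pi.mulSingle i (Multiplicative.ofAdd 1), 1))) =
            (Pi.mulSingle i (Multiplicative.ofAdd 1) : J → Multiplicative ℤ) :=
        congrArg Prod.fst (E.apply_symm_apply _)
      rw [hE, ← Pi.mulSingle_pow, ← ofAdd_nsmul, nsmul_eq_mul, mul_one, Nat.cast_mul]
    have h' := congrArg p h
    simp only [hp] at h'
    funext i
    have hi : (q * κ i : ℤ) = q * κ' i := Multiplicative.ofAdd.injective (congrFun h' i)
    exact_mod_cast mul_left_cancel₀ (by exact_mod_cast hq.ne') hi
  obtain ⟨L, hL1, hL⟩ := conjLazy_steps (b := b) hℓ1 fun i f => by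
    simpa [b] using hℓ (i, f)
  set z : MonoidAlgebra ℝ≥0 Λ := ∏ i, conjLazy (b i)
  have hz : IsMarkov (firstFactor Λ) z :=
    IsMarkov.prod _ fun i _ => IsMarkov.prod _ fun f _ => IsMarkov.lazy _
  have hLq : ∀ u ∈ z.coeff.support, 0 < convPow ν (L + q) (firstFactor Λ u) := fun u hu =>
    convPow_noised_pos hμ (by norm_num) (by norm_num)
      (by simpa [firstFactor] using ((hL u hu).mul hq1).convPow_pos)
      (by simpa [firstFactor] using (hL1.mul hq1).convPow_pos)
  obtain ⟨c, hc, hc1, hdom⟩ := exists_domination firstFactor_injective hν hz hLq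
  obtain ⟨a, ha, ha1, hdecay⟩ := exists_iterate_decay _ (act (firstFactor Λ) z) D (Fintype.card J)
    hc hc1 hdom
    (fun F => (Function.Commute.iterate_right
      (f := fun F => act (firstFactor Λ) z F) (g := avg ν)
      (act_firstFactor_prod_conjLazy_comm b ν) (L + q)) F)
    (fun j x => by
      rw [← Module.End.coe_pow, ← map_pow]
      exact act_firstFactor_prod_conjLazy_pow_le hb j x)
  have hK : 0 < L + q := by omega
  set K := L + q
  have haK : 0 < a / K := by positivity
  refine ⟨(√(a / K))⁻¹ ^ Fintype.card J, by positivity, fun n hn B =>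
    sum_diagonal_le hμ n (by positivity) ?_ B⟩
  rw [← mul_pow, ← mul_inv, ← Real.sqrt_mul haK.le]
  have hsplit : (avg ν)^[n] D = (avg ν)^[n % K] (((avg ν)^[K])^[n / K] D) := by
    rw [← Function.iterate_mul, ← Function.iterate_add_apply, Nat.mod_add_div]
  rw [hsplit]
  refine hν.avg_iterate_le _ (fun x => (hdecay _ x).trans (ENNReal.ofReal_le_ofReal ?_)) _
  have hn0 : (0 : ℝ) < n := by exact_mod_cast hn
  gcongr
  have h1 : (n : ℝ) = (n % K : ℕ) + K * (n / K : ℕ) := by exact_mod_cast (Nat.mod_add_div n K).symm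
  have h2 : ((n % K : ℕ) : ℝ) ≤ K := by exact_mod_cast (Nat.mod_lt n hK).le
  have hK' : (0 : ℝ) < K := by exact_mod_cast hK
  rw [div_mul_eq_mul_div, div_le_iff₀ hK']
  nlinarith [mul_le_mul_of_nonneg_right ha1 hK'.le]

end DiagonalDecay

section Poisson

variable {Γ : Type*} [Group Γ] {Λ : Subgroup Γ} [Λ.Normal] [Fintype (Γ ⧸ Λ)] {μ : Γ → ℝ}

theorem summable_mul_of_abs_le {ι : Type*} {w f : ι → ℝ} {c : ℝ} (hw0 : ∀ i, 0 ≤ w i)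
    (hw : Summable w) (hf : ∀ i, |f i| ≤ c) : Summable fun i => w i * f i := by
  refine (hw.mul_right c).of_norm_bounded fun i => ?_
  rw [Real.norm_eq_abs, abs_mul, abs_of_nonneg (hw0 i)]
  exact mul_le_mul_of_nonneg_left (hf i) (hw0 i)

theorem summable_mul_comp_quotient (hμ : IsProb μ) (f : Γ ⧸ Λ → ℝ) (x : Γ ⧸ Λ) :
    Summable fun s : Γ => μ s * f (x * s) :=
  summable_mul_of_abs_le hμ.1 hμ.2.summable fun s =>
    Finset.single_le_sum (f := fun y => |f y|) (fun _ _ => abs_nonneg _)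
      (Finset.mem_univ (x * (s : Γ ⧸ Λ)))

/-- The Markov operator of the projected random walk on the quotient. -/
noncomputable def quotientAvg (hμ : IsProb μ) (Λ : Subgroup Γ) [Λ.Normal] [Fintype (Γ ⧸ Λ)] :
    (Γ ⧸ Λ → ℝ) →ₗ[ℝ] (Γ ⧸ Λ → ℝ) where
  toFun f x := ∑' s : Γ, μ s * f (x * s)
  map_add' f g := by
    ext x
    simp only [Pi.add_apply, mul_add]
    exact (summable_mul_comp_quotient hμ f x).tsum_add (summable_mul_comp_quotient hμ g x)
  map_smul' r f := by
    ext x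
    simp only [Pi.smul_apply, smul_eq_mul, RingHom.id_apply, ← tsum_mul_left]
    exact tsum_congr fun s => by ring

theorem sub_quotientAvg_apply (hμ : IsProb μ) (f : Γ ⧸ Λ → ℝ) (x : Γ ⧸ Λ) :
    f x - quotientAvg hμ Λ f x = ∑' s : Γ, μ s * (f x - f (x * s)) := by
  simp only [mul_sub]
  rw [(hμ.2.summable.mul_right _).tsum_sub (summable_mul_comp_quotient hμ f x), tsum_mul_right,
    hμ.2.tsum_eq, one_mul]
  rfl

theorem quotientAvg_le (hμ : IsProb μ) {f : Γ ⧸ Λ → ℝ} {x : Γ ⧸ Λ} (hx : ∀ y, f y ≤ f x) :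
    quotientAvg hμ Λ f x ≤ f x := by
  rw [← sub_nonneg, sub_quotientAvg_apply]
  exact tsum_nonneg fun s => mul_nonneg (hμ.1 s) (sub_nonneg.2 (hx _))

/-- Maximum principle. -/
theorem eq_of_quotientAvg_eq (hμ : IsProb μ) (hnd : Nondeg μ) {f : Γ ⧸ Λ → ℝ}
    (hf : quotientAvg hμ Λ f = f) (x y : Γ ⧸ Λ) : f x = f y := by
  obtain ⟨z, hz⟩ := Finite.exists_max f
  suffices h : ∀ (g : Γ) (x : Γ ⧸ Λ), f x = f z → f (x * g) = f z by
    have h' : ∀ y, f y = f z := fun y => by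
      have := h (z⁻¹ * y).out z rfl
      rwa [QuotientGroup.out_eq', mul_inv_cancel_left] at this
    rw [h' x, h' y]
  intro g
  induction hnd g using Subsemigroup.closure_induction with
  | mem s hs =>
    intro x hx
    have h0 := sub_quotientAvg_apply hμ f x
    rw [hf, sub_self] at h0
    have hsum : Summable fun s : Γ => μ s * (f x - f (x * s)) := by
      simp only [mul_sub]
      exact (hμ.2.summable.mul_right _).sub (summable_mul_comp_quotient hμ f x)
    have hnn : ∀ s : Γ, 0 ≤ μ s * (f x - f (x * s)) := fun s =>
      mul_nonneg (hμ.1 s) (sub_nonneg.2 (hx ▸ hz _))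
    have h1 := congrFun ((hasSum_zero_iff_of_nonneg hnn).1 (h0 ▸ hsum.hasSum)) s
    have h2 := (mul_eq_zero.1 h1).resolve_left (ne_of_gt hs)
    linarith
  | mul a b _ _ ha hb =>
    intro x hx
    rw [QuotientGroup.mk_mul, ← mul_assoc]
    exact hb _ (ha x hx)

/-- The Poisson equation on the quotient is solvable up to a constant. -/
theorem exists_poisson (hμ : IsProb μ) (hnd : Nondeg μ) (d : Γ ⧸ Λ → ℝ) :
    ∃ (f : Γ ⧸ Λ → ℝ) (b : ℝ), ∀ x, d x + quotientAvg hμ Λ f x - f x = b := by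
  let A : (Γ ⧸ Λ → ℝ) →ₗ[ℝ] (Γ ⧸ Λ → ℝ) := LinearMap.id - quotientAvg hμ Λ +
    LinearMap.pi fun _ => LinearMap.proj 1
  have hA : ∀ f x, A f x = f x - quotientAvg hμ Λ f x + f 1 := fun _ _ => rfl
  have hinj : Function.Injective A := by
    refine (injective_iff_map_eq_zero A).2 fun f hf => ?_
    have h : ∀ x, f x - quotientAvg hμ Λ f x + f 1 = 0 := fun x => by rw [← hA, hf]; rfl
    have h1 : f 1 = 0 := by
      obtain ⟨x, hx⟩ := Finite.exists_max f
      obtain ⟨y, hy⟩ := Finite.exists_max (-f)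
      have hx' := quotientAvg_le hμ hx
      have hy' := quotientAvg_le hμ hy
      rw [map_neg] at hy'
      simp only [Pi.neg_apply] at hy'
      have := h x
      have := h y
      linarith
    have hP : quotientAvg hμ Λ f = f := by
      ext x
      have := h x
      linarith
    ext x
    rw [eq_of_quotientAvg_eq hμ hnd hP x 1, h1]
    rfl
  obtain ⟨f, hf⟩ := LinearMap.injective_iff_surjective.1 hinj d
  exact ⟨f, f 1, fun x => by rw [← hf, hA]; ring⟩

end Poisson

section Growth

variable {Γ : Type*} [Group Γ]

theorem exists_list_length_eq_wordLength {S₀ : Finset Γ} (hS : ∀ s ∈ S₀, s⁻¹ ∈ S₀)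
    (hgen : Subgroup.closure (S₀ : Set Γ) = ⊤) (g : Γ) :
    ∃ l : List Γ, (∀ s ∈ l, s ∈ S₀) ∧ l.length = wordLength S₀ g ∧ l.prod = g := by
  have hg : g ∈ (Subgroup.closure (S₀ : Set Γ)).toSubmonoid := hgen ▸ Subgroup.mem_top g
  rw [Subgroup.closure_toSubmonoid] at hg
  obtain ⟨l, hl, hlg⟩ := Submonoid.exists_list_of_mem_closure hg
  exact Nat.sInf_mem (s := {n : ℕ | ∃ l : List Γ, (∀ s ∈ l, s ∈ S₀) ∧ l.length = n ∧ l.prod = g})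
    ⟨l.length, l, fun s hs => (hl s hs).elim id fun h => by simpa using hS _ h, rfl, hlg⟩

/-- The increments of `H` depend on the starting point only through its coset. -/
def CosetIncrements (Λ : Subgroup Γ) (H : Γ → ℝ) : Prop :=
  ∀ (γ γ' s : Γ), (γ : Γ ⧸ Λ) = γ' → H (γ * s) - H γ = H (γ' * s) - H γ'

theorem CosetIncrements.exists_growth {Λ : Subgroup Γ} [Fintype (Γ ⧸ Λ)] {H : Γ → ℝ}
    (hH : CosetIncrements Λ H) {S₀ : Finset Γ} (hS : ∀ s ∈ S₀, s⁻¹ ∈ S₀)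
    (hgen : Subgroup.closure (S₀ : Set Γ) = ⊤) :
    ∃ C : ℝ, 0 ≤ C ∧ ∀ γ s, |H (γ * s) - H γ| ≤ C * wordLength S₀ s := by
  let κ : Γ ⧸ Λ → Γ → ℝ := fun f s => |H (f.out * s) - H f.out|
  refine ⟨∑ f, ∑ s ∈ S₀, κ f s, by positivity, fun γ s => ?_⟩
  obtain ⟨l, hl, hlen, rfl⟩ := exists_list_length_eq_wordLength hS hgen s
  rw [← hlen]
  clear hlen
  induction l generalizing γ with
  | nil => simp
  | cons s l ih =>
    have h1 := ih (γ * s) fun t ht => hl t (List.mem_cons_of_mem s ht)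
    have h2 : |H (γ * s) - H γ| ≤ ∑ f, ∑ s ∈ S₀, κ f s := by
      rw [hH γ (γ : Γ ⧸ Λ).out s (QuotientGroup.out_eq' _).symm]
      refine (Finset.single_le_sum (f := κ γ) (fun _ _ => abs_nonneg _)
        (hl s List.mem_cons_self)).trans ?_
      exact Finset.single_le_sum (f := fun f => ∑ s ∈ S₀, κ f s)
        (fun _ _ => Finset.sum_nonneg fun _ _ => abs_nonneg _) (Finset.mem_univ _)
    rw [List.prod_cons, List.length_cons, ← mul_assoc]
    push_cast
    rw [mul_add, mul_one]
    exact (abs_sub_le _ _ _).trans (add_le_add h1 h2)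

end Growth

section Variance

open scoped ENNReal

variable {Γ : Type*} [Group Γ] {μ : Γ → ℝ}

theorem tsum_ofReal_mul_ofReal {ι : Type*} {w f : ι → ℝ} {t : ℝ} (hw : ∀ i, 0 ≤ w i)
    (hf : ∀ i, 0 ≤ f i) (h : HasSum (fun i => w i * f i) t) :
    ∑' i, ENNReal.ofReal (w i) * ENNReal.ofReal (f i) = ENNReal.ofReal t := by
  rw [← h.tsum_eq, ENNReal.ofReal_tsum_of_nonneg (fun i => mul_nonneg (hw i) (hf i)) h.summable]
  exact tsum_congr fun i => (ENNReal.ofReal_mul (hw i)).symm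

/-- A function with increments of constant mean `b` and second moment at most `V`. -/
structure HasDrift (μ H : Γ → ℝ) (b V : ℝ) : Prop where
  mean : ∀ γ, HasSum (fun s => μ s * (H (γ * s) - H γ)) b
  summable_sq : ∀ γ, Summable fun s => μ s * (H (γ * s) - H γ) ^ 2
  tsum_sq_le : ∀ γ, ∑' s, μ s * (H (γ * s) - H γ) ^ 2 ≤ V

theorem HasDrift.avg_sq_le {H : Γ → ℝ} {b V : ℝ} (hH : HasDrift μ H b V) (hμ : IsProb μ) (a : ℝ)
    (x : Γ) : avg μ (fun y => ENNReal.ofReal ((H y - a) ^ 2)) x ≤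
      ENNReal.ofReal ((H x - (a - b)) ^ 2) + ENNReal.ofReal V := by
  have h := ((hH.summable_sq x).hasSum.add ((hH.mean x).mul_left (2 * (H x - a)))).add
    (hμ.2.mul_right ((H x - a) ^ 2))
  have h' : HasSum (fun s => μ s * (H (x * s) - a) ^ 2) _ := h.congr_fun fun s => by ring
  have hV : 0 ≤ V := (tsum_nonneg fun s => mul_nonneg (hμ.1 s) (sq_nonneg _)).trans
    (hH.tsum_sq_le x)
  rw [avg, tsum_ofReal_mul_ofReal hμ.1 (fun _ => sq_nonneg _) h',
    ← ENNReal.ofReal_add (sq_nonneg _) hV]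
  refine ENNReal.ofReal_le_ofReal ?_
  nlinarith [hH.tsum_sq_le x, sq_nonneg b]

theorem HasDrift.avg_iterate_sq_le {H : Γ → ℝ} {b V : ℝ} (hH : HasDrift μ H b V) (hμ : IsProb μ)
    (a : ℝ) (n : ℕ) (x : Γ) : (avg μ)^[n] (fun y => ENNReal.ofReal ((H y - a) ^ 2)) x ≤
      ENNReal.ofReal ((H x - (a - n * b)) ^ 2) + n * ENNReal.ofReal V := by
  induction n generalizing x with
  | zero => simp
  | succ n ih =>
    rw [Function.iterate_succ_apply']
    refine (avg_mono ih x).trans ?_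
    rw [avg_add_const hμ]
    refine (add_le_add_left (hH.avg_sq_le hμ _ x) _).trans_eq ?_
    push_cast
    rw [show a - n * b - b = a - (n + 1) * b by ring]
    ring

theorem CosetIncrements.exists_hasDrift {Λ : Subgroup Γ} [Λ.Normal] [Fintype (Γ ⧸ Λ)] {H : Γ → ℝ}
    (hH : CosetIncrements Λ H) (hμ : IsProb μ) (hmom : FinSecondMoment μ) (hnd : Nondeg μ) :
    ∃ (H' : Γ → ℝ) (b V M : ℝ), HasDrift μ H' b V ∧ ∀ x, |H x - H' x| ≤ M := by
  obtain ⟨S₀, hS, hgen, hsum⟩ := hmom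
  obtain ⟨C, hC, hgrowth⟩ := hH.exists_growth hS hgen
  set N : Γ → ℝ := fun s => wordLength S₀ s
  have hmean : ∀ γ, Summable fun s => μ s * (H (γ * s) - H γ) := fun γ => by
    refine (hsum.mul_left C).of_norm_bounded fun s => ?_
    rw [Real.norm_eq_abs, abs_mul, abs_of_nonneg (hμ.1 s), mul_comm (μ s), ← mul_assoc]
    refine mul_le_mul_of_nonneg_right ((hgrowth γ s).trans ?_) (hμ.1 s)
    refine mul_le_mul_of_nonneg_left ?_ hC
    exact_mod_cast Nat.le_self_pow two_ne_zero _
  obtain ⟨f, b, hb⟩ := exists_poisson hμ hnd fun x : Γ ⧸ Λ =>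
    ∑' s, μ s * (H (x.out * s) - H x.out)
  set M : ℝ := ∑ y, |f y|
  have hM : ∀ y, |f y| ≤ M := fun y =>
    Finset.single_le_sum (f := fun y => |f y|) (fun _ _ => abs_nonneg _) (Finset.mem_univ y)
  have hM0 : 0 ≤ M := (abs_nonneg _).trans (hM 1)
  set H' : Γ → ℝ := fun x => H x + f x
  have hsq : ∀ γ s, μ s * (H' (γ * s) - H' γ) ^ 2 ≤
      2 * C ^ 2 * (N s ^ 2 * μ s) + 8 * M ^ 2 * μ s := by
    intro γ s
    have h1 : |H' (γ * s) - H' γ| ≤ C * N s + 2 * M := by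
      have h2 := abs_le.1 (hgrowth γ s)
      have h3 := abs_le.1 (hM (γ * s : Γ))
      have h4 := abs_le.1 (hM γ)
      exact abs_le.2 ⟨by simp only [H']; linarith, by simp only [H']; linarith⟩
    have h2 : (H' (γ * s) - H' γ) ^ 2 ≤ (C * N s + 2 * M) ^ 2 := sq_le_sq.2
      (h1.trans (le_abs_self _))
    nlinarith [mul_le_mul_of_nonneg_left h2 (hμ.1 s),
      mul_nonneg (hμ.1 s) (sq_nonneg (C * N s - 2 * M))]
  have hdom := (hsum.mul_left (2 * C ^ 2)).add (hμ.2.summable.mul_left (8 * M ^ 2))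
  have hsq' : ∀ γ, Summable fun s => μ s * (H' (γ * s) - H' γ) ^ 2 := fun γ =>
    hdom.of_nonneg_of_le (fun s => mul_nonneg (hμ.1 s) (sq_nonneg _)) (hsq γ)
  refine ⟨H', b, _, M, ⟨fun γ => ?_, hsq', fun γ => (hsq' γ).tsum_le_tsum (hsq γ) hdom⟩,
    fun x => by simpa [H'] using hM x⟩
  rw [← hb γ]
  have h1 := ((hmean γ).hasSum.add (summable_mul_comp_quotient hμ f γ).hasSum).sub
    (hμ.2.mul_right (f γ))
  have h2 : ∑' s, μ s * (H (γ * s) - H γ) =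
      ∑' s, μ s * (H ((γ : Γ ⧸ Λ).out * s) - H (γ : Γ ⧸ Λ).out) :=
    tsum_congr fun s => by rw [hH γ _ s (QuotientGroup.out_eq' _).symm]
  rw [one_mul, h2] at h1
  refine h1.congr_fun fun s => ?_
  simp only [H', QuotientGroup.mk_mul]
  ring

theorem CosetIncrements.exists_variance_bound {Λ : Subgroup Γ} [Λ.Normal] [Fintype (Γ ⧸ Λ)]
    {H : Γ → ℝ} (hH : CosetIncrements Λ H) (hμ : IsProb μ) (hmom : FinSecondMoment μ)
    (hnd : Nondeg μ) : ∃ V : ℝ, 0 ≤ V ∧ ∀ n : ℕ, 1 ≤ n → ∃ c : ℝ,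
      ∑' x, ENNReal.ofReal (convPow μ n x) * ENNReal.ofReal ((H x - c) ^ 2) ≤
        ENNReal.ofReal (V * n) := by
  obtain ⟨H', b, V, M, hd, hM⟩ := hH.exists_hasDrift hμ hmom hnd
  have hV : 0 ≤ V := (tsum_nonneg fun s => mul_nonneg (hμ.1 s) (sq_nonneg _)).trans
    (hd.tsum_sq_le 1)
  refine ⟨2 * V + 2 * M ^ 2, by positivity, fun n hn => ⟨H' 1 + n * b, ?_⟩⟩
  have h := hd.avg_iterate_sq_le hμ (H' 1 + n * b) n 1
  rw [← tsum_convPow_mul_one hμ, add_sub_cancel_right, sub_self, zero_pow two_ne_zero,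
    ENNReal.ofReal_zero, zero_add] at h
  calc ∑' x, ENNReal.ofReal (convPow μ n x) * ENNReal.ofReal ((H x - (H' 1 + n * b)) ^ 2)
      ≤ ∑' x, (ENNReal.ofReal 2 * (ENNReal.ofReal (convPow μ n x) *
          ENNReal.ofReal ((H' x - (H' 1 + n * b)) ^ 2)) +
          ENNReal.ofReal (convPow μ n x) * ENNReal.ofReal (2 * M ^ 2)) := by
        refine ENNReal.tsum_le_tsum fun x => ?_
        rw [mul_left_comm, ← mul_add, ← ENNReal.ofReal_mul zero_le_two,
          ← ENNReal.ofReal_add (by positivity) (by positivity)]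
        gcongr
        have h1 : (H x - H' x) ^ 2 ≤ M ^ 2 := sq_le_sq.2 ((hM x).trans (le_abs_self _))
        nlinarith [sq_nonneg (H x - H' x - (H' x - (H' 1 + n * b)))]
    _ ≤ ENNReal.ofReal 2 * (n * ENNReal.ofReal V) + ENNReal.ofReal (2 * M ^ 2) := by
        rw [ENNReal.tsum_add, ENNReal.tsum_mul_left, ENNReal.tsum_mul_right,
          (hμ.convPow n).tsum_ofReal, one_mul]
        gcongr
    _ ≤ ENNReal.ofReal ((2 * V + 2 * M ^ 2) * n) := by
        have hn1 : (1 : ℝ) ≤ n := by exact_mod_cast hn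
        rw [← ENNReal.ofReal_natCast, ← ENNReal.ofReal_mul (by positivity),
          ← ENNReal.ofReal_mul zero_le_two, ← ENNReal.ofReal_add (by positivity) (by positivity)]
        refine ENNReal.ofReal_le_ofReal ?_
        nlinarith [mul_nonneg (sub_nonneg.2 hn1) (sq_nonneg M)]

end Variance

section Boxes

open scoped ENNReal

variable {Γ : Type*} [Group Γ] {Λ : Subgroup Γ} [Λ.Normal] {μ : Γ → ℝ}

/-- The component of `γ` in `Λ`, with respect to the chosen coset representatives. -/
noncomputable def cosetPart (Λ : Subgroup Γ) [Λ.Normal] (γ : Γ) : Λ :=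
  ⟨γ * (γ : Γ ⧸ Λ).out⁻¹, by
    rw [← QuotientGroup.eq_one_iff, QuotientGroup.mk_mul, QuotientGroup.mk_inv,
      QuotientGroup.out_eq', mul_inv_cancel]⟩

theorem cosetPart_mul (γ s : Γ) :
    cosetPart Λ (γ * s) = cosetPart Λ γ * cosetPart Λ ((γ : Γ ⧸ Λ).out * s) := by
  ext
  simp only [cosetPart, Subgroup.coe_mul, QuotientGroup.mk_mul, QuotientGroup.out_eq']
  group

theorem cosetIncrements_cosetPart (χ : Λ →* Multiplicative ℤ) :
    CosetIncrements Λ fun γ => ((χ (cosetPart Λ γ)).toAdd : ℝ) := fun γ γ' s h => by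
  beta_reduce
  rw [cosetPart_mul γ, cosetPart_mul γ', map_mul χ, map_mul χ, toAdd_mul, toAdd_mul, Int.cast_add,
    Int.cast_add, add_sub_cancel_left, add_sub_cancel_left, h]

theorem card_Icc_ceil_floor_le (c : ℝ) {r : ℝ} (hr : 0 ≤ r) :
    ((Finset.Icc ⌈c - r⌉ ⌊c + r⌋).card : ℝ) ≤ 2 * r + 1 := by
  rw [Int.card_Icc]
  have h1 := Int.le_ceil (c - r)
  have h2 := Int.floor_le (c + r)
  have h3 : (((⌊c + r⌋ + 1 - ⌈c - r⌉).toNat : ℤ) : ℝ) = (max (⌊c + r⌋ + 1 - ⌈c - r⌉) 0 : ℤ) := by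
    rw [Int.ofNat_toNat]
  rw [← Int.cast_natCast, h3, Int.cast_max]
  push_cast
  exact max_le (by linarith) (by linarith)

variable [Fintype (Γ ⧸ Λ)] {J T : Type*} [Fintype J] [Group T] [Fintype T]

theorem exists_box (E : Λ ≃* (J → Multiplicative ℤ) × T) (c : J → ℝ) {r : ℝ} (hr : 0 ≤ r) :
    ∃ B : Finset Γ, (B.card : ℝ) ≤
        Fintype.card (Γ ⧸ Λ) * Fintype.card T * (2 * r + 1) ^ Fintype.card J ∧
      ∀ x ∉ B, ∃ i, r < |(((E (cosetPart Λ x)).1 i).toAdd : ℝ) - c i| := by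
  let S : Finset ((Γ ⧸ Λ) × T × (J → ℤ)) := Finset.univ ×ˢ Finset.univ ×ˢ
    Fintype.piFinset fun i => Finset.Icc ⌈c i - r⌉ ⌊c i + r⌋
  refine ⟨S.image fun p => E.symm (fun i => Multiplicative.ofAdd (p.2.2 i), p.2.1) * p.1.out,
    ?_, fun x hx => ?_⟩
  · calc _ ≤ (S.card : ℝ) := by exact_mod_cast Finset.card_image_le
      _ = Fintype.card (Γ ⧸ Λ) * Fintype.card T *
          ∏ i, ((Finset.Icc ⌈c i - r⌉ ⌊c i + r⌋).card : ℝ) := by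
        simp [S, Finset.card_product, Fintype.card_piFinset, mul_assoc]
      _ ≤ _ := by
        gcongr
        refine (Finset.prod_le_prod (fun _ _ => Nat.cast_nonneg _)
          fun i _ => card_Icc_ceil_floor_le (c i) hr).trans_eq ?_
        rw [Finset.prod_const, Finset.card_univ]
  · by_contra! h
    refine hx (Finset.mem_image.2 ⟨(x, (E (cosetPart Λ x)).2,
      fun i => ((E (cosetPart Λ x)).1 i).toAdd), ?_, ?_⟩)
    · simp only [S, Finset.mem_product, Finset.mem_univ, Fintype.mem_piFinset, Finset.mem_Icc,
        true_and]
      intro i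
      have := abs_le.1 (h i)
      exact ⟨Int.ceil_le.2 (by linarith), Int.le_floor.2 (by linarith)⟩
    · change (E.symm (E (cosetPart Λ x)) : Γ) * _ = x
      rw [E.symm_apply_apply]
      simp [cosetPart]

theorem exists_box_tail_le (E : Λ ≃* (J → Multiplicative ℤ) × T) (hμ : IsProb μ)
    (hmom : FinSecondMoment μ) (hnd : Nondeg μ) {ε : ℝ} (hε : 0 < ε) :
    ∃ K : ℝ, 0 ≤ K ∧ ∀ n : ℕ, 1 ≤ n → ∃ B : Finset Γ,
      (B.card : ℝ) ≤ K * √n ^ Fintype.card J ∧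
      ∑' x, ENNReal.ofReal (convPow μ n x) * (if x ∈ B then 0 else 1) ≤ ENNReal.ofReal ε := by
  choose V hV0 hV using fun i => (cosetIncrements_cosetPart
    ((Pi.evalMonoidHom (fun _ : J => Multiplicative ℤ) i).comp
      ((MonoidHom.fst _ T).comp E.toMonoidHom))).exists_variance_bound hμ hmom hnd
  set R : ℝ := √((∑ i, V i) / ε) + 1
  have hsum : 0 ≤ ∑ i, V i := Finset.sum_nonneg fun i _ => hV0 i
  have hR1 : 1 ≤ R := by simp [R]
  have hR : ∑ i, V i ≤ ε * R ^ 2 := by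
    have h1 : (∑ i, V i) / ε ≤ R ^ 2 := by
      rw [← Real.sq_sqrt (div_nonneg hsum hε.le)]
      gcongr
      simp [R]
    rwa [div_le_iff₀' hε] at h1
  refine ⟨Fintype.card (Γ ⧸ Λ) * Fintype.card T * (2 * R + 1) ^ Fintype.card J, by positivity,
    fun n hn => ?_⟩
  have hn1 : (1 : ℝ) ≤ n := by exact_mod_cast hn
  have hsn : 1 ≤ √(n : ℝ) := Real.one_le_sqrt.2 hn1
  choose c hc using fun i => hV i n hn
  obtain ⟨B, hB, hBc⟩ := exists_box E c (r := R * √n) (by positivity)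
  refine ⟨B, hB.trans ?_, ?_⟩
  · rw [mul_assoc _ (_ ^ _), ← mul_pow]
    gcongr
    nlinarith
  have hr : (R * √n) ^ 2 = R ^ 2 * n := by rw [mul_pow, Real.sq_sqrt (by positivity)]
  have hpos : 0 < R ^ 2 * n := by positivity
  set h : J → Γ → ℝ := fun i x => (((E (cosetPart Λ x)).1 i).toAdd : ℝ) - c i
  calc ∑' x, ENNReal.ofReal (convPow μ n x) * (if x ∈ B then 0 else 1)
      ≤ ∑' x, ENNReal.ofReal (R ^ 2 * n)⁻¹ *
          ∑ i, ENNReal.ofReal (convPow μ n x) * ENNReal.ofReal (h i x ^ 2) := by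
        refine ENNReal.tsum_le_tsum fun x => ?_
        rw [← Finset.mul_sum, mul_left_comm]
        gcongr
        split_ifs with hx
        · exact zero_le
        · obtain ⟨i, hi⟩ := hBc x hx
          refine le_trans ?_ (mul_le_mul_right (Finset.single_le_sum
            (f := fun i => ENNReal.ofReal (h i x ^ 2)) (fun _ _ => zero_le) (Finset.mem_univ i)) _)
          rw [← ENNReal.ofReal_mul (by positivity), ENNReal.one_le_ofReal, ← div_eq_inv_mul,
            one_le_div hpos, ← hr, ← sq_abs (h i x)]
          gcongr
    _ = ENNReal.ofReal (R ^ 2 * n)⁻¹ *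
          ∑ i, ∑' x, ENNReal.ofReal (convPow μ n x) * ENNReal.ofReal (h i x ^ 2) := by
        rw [ENNReal.tsum_mul_left, Summable.tsum_finsetSum fun _ _ => ENNReal.summable]
    _ ≤ ENNReal.ofReal (R ^ 2 * n)⁻¹ * ∑ i, ENNReal.ofReal (V i * n) := by
        gcongr with i
        exact hc i
    _ ≤ ENNReal.ofReal ε := by
        rw [← ENNReal.ofReal_sum_of_nonneg fun i _ => mul_nonneg (hV0 i) (by positivity),
          ← ENNReal.ofReal_mul (by positivity), ← Finset.sum_mul]
        refine ENNReal.ofReal_le_ofReal ?_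
        rw [← div_eq_inv_mul, div_le_iff₀ hpos, ← mul_assoc]
        gcongr

end Boxes

section TotalVariation

open scoped ENNReal

theorem tv_nonneg {Z : Type*} (p q : Z → ℝ) : 0 ≤ tv p q :=
  mul_nonneg (by norm_num) (tsum_nonneg fun _ => abs_nonneg _)

theorem tsum_ofReal_mul_le_of_marginals {X : Type*} {w : X × X → ℝ} {B : Finset X} {ε : ℝ}
    (hε : 0 ≤ ε)
    (h1 : ∑' z, ENNReal.ofReal (w z) * (if z.1 ∈ B then 0 else 1) ≤ ENNReal.ofReal ε)
    (h2 : ∑' z, ENNReal.ofReal (w z) * (if z.2 ∈ B then 0 else 1) ≤ ENNReal.ofReal ε) :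
    ∑' z, ENNReal.ofReal (w z) * (if z ∈ B ×ˢ B then 0 else 1) ≤ ENNReal.ofReal (2 * ε) := by
  rw [two_mul, ENNReal.ofReal_add hε hε]
  refine le_trans ?_ (add_le_add h1 h2)
  rw [← ENNReal.tsum_add]
  refine ENNReal.tsum_le_tsum fun z => ?_
  rw [← mul_add]
  gcongr
  by_cases hz1 : z.1 ∈ B <;> by_cases hz2 : z.2 ∈ B <;> simp [hz1, hz2]

theorem tv_le_of_tails {Z : Type*} [DecidableEq Z] {p q : Z → ℝ} (hp : IsProb p)
    (hq : IsProb q) {B : Finset Z}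
    {S ε : ℝ} (hε : 0 ≤ ε) (hS : ∑ z ∈ B, |p z - q z| ≤ S)
    (hpB : ∑' z, ENNReal.ofReal (p z) * (if z ∈ B then 0 else 1) ≤ ENNReal.ofReal ε)
    (hqB : ∑' z, ENNReal.ofReal (q z) * (if z ∈ B then 0 else 1) ≤ ENNReal.ofReal ε) :
    tv p q ≤ S / 2 + ε := by
  have hS0 : 0 ≤ S := (Finset.sum_nonneg fun _ _ => abs_nonneg _).trans hS
  suffices h : ∑' z, |p z - q z| ≤ S + (ε + ε) by rw [tv]; linarith
  rw [← ENNReal.ofReal_le_ofReal_iff (by positivity),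
    ENNReal.ofReal_tsum_of_nonneg (fun _ => abs_nonneg _) (hp.2.summable.sub hq.2.summable).abs,
    ENNReal.ofReal_add hS0 (by positivity), ENNReal.ofReal_add hε hε]
  calc ∑' z, ENNReal.ofReal |p z - q z|
      ≤ ∑' z, ((if z ∈ B then ENNReal.ofReal |p z - q z| else 0) +
          (ENNReal.ofReal (p z) * (if z ∈ B then 0 else 1) +
            ENNReal.ofReal (q z) * (if z ∈ B then 0 else 1))) := by
        refine ENNReal.tsum_le_tsum fun z => ?_
        split_ifs
        · exact le_self_add
        · rw [mul_one, mul_one, zero_add, ← ENNReal.ofReal_add (hp.1 z) (hq.1 z)]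
          refine ENNReal.ofReal_le_ofReal (abs_le.2 ⟨?_, ?_⟩) <;> linarith [hp.1 z, hq.1 z]
    _ ≤ _ := by
        rw [ENNReal.tsum_add, ENNReal.tsum_add]
        gcongr
        rw [tsum_eq_sum (s := B) fun z hz => if_neg hz, Finset.sum_congr rfl fun z hz => if_pos hz,
          ← ENNReal.ofReal_sum_of_nonneg fun _ _ => abs_nonneg _]
        exact ENNReal.ofReal_le_ofReal hS

theorem tsum_prod_mul_fst {X : Type*} {w : X → ℝ} (hw : IsProb w) (f : X → ℝ≥0∞) :
    ∑' z : X × X, ENNReal.ofReal (w z.1 * w z.2) * f z.1 = ∑' x, ENNReal.ofReal (w x) * f x := by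
  rw [ENNReal.tsum_prod']
  refine tsum_congr fun x => ?_
  simp only [ENNReal.ofReal_mul (hw.1 x)]
  rw [ENNReal.tsum_mul_right, ENNReal.tsum_mul_left, hw.tsum_ofReal, mul_one]

theorem tsum_prod_mul_snd {X : Type*} {w : X → ℝ} (hw : IsProb w) (f : X → ℝ≥0∞) :
    ∑' z : X × X, ENNReal.ofReal (w z.1 * w z.2) * f z.2 = ∑' x, ENNReal.ofReal (w x) * f x := by
  rw [← tsum_prod_mul_fst hw, ← (Equiv.prodComm X X).tsum_eq]
  exact tsum_congr fun z => by rw [mul_comm (w _)]; rfl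

variable {Γ : Type*} [Group Γ] {μ : Γ → ℝ}

theorem tv_noised_le (hμ : IsProb μ) {ρ : ℝ} (h0 : 1 / 2 ≤ ρ) (h1 : ρ ≤ 1) (n : ℕ) {B : Finset Γ}
    {t ε : ℝ} (hε : 0 ≤ ε) (ht : ∑ x ∈ B, convPow (noised μ (1 / 2)) n (x, x) ≤ t)
    (hB : ∑' x, ENNReal.ofReal (convPow μ n x) * (if x ∈ B then 0 else 1) ≤ ENNReal.ofReal ε) :
    tv (convPow (noised μ ρ) n) (fun p => convPow μ n p.1 * convPow μ n p.2) ≤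
      B.card * t * (1 - ρ) + 2 * ε := by
  have h0' : 0 ≤ ρ := by linarith
  have hn := hμ.convPow n
  refine (tv_le_of_tails ((isProb_noised hμ h0' h1).convPow n) (hn.prod hn)
    (mul_nonneg zero_le_two hε)
    (sum_abs_noised_sub_le hμ h0 h1 n B ht) ?_ ?_).trans_eq (by ring)
  · refine tsum_ofReal_mul_le_of_marginals hε ?_ ?_
    · exact (tsum_convPow_noised_fst hμ h0' h1 n fun x => if x ∈ B then 0 else 1).trans_le hB
    · exact (tsum_convPow_noised_snd hμ h0' h1 n fun x => if x ∈ B then 0 else 1).trans_le hB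
  · refine tsum_ofReal_mul_le_of_marginals hε ?_ ?_
    · exact (tsum_prod_mul_fst hn fun x => if x ∈ B then 0 else 1).trans_le hB
    · exact (tsum_prod_mul_snd hn fun x => if x ∈ B then 0 else 1).trans_le hB

/-- The distance to the product measure is small as `ρ → 1`, uniformly in time. -/
theorem exists_tv_noised_le (hFG : Group.FG Γ) (hVA : VirtAbelian Γ) (hμ : IsProb μ)
    (hmom : FinSecondMoment μ) (hnd : Nondeg μ) {ε : ℝ} (hε : 0 < ε) :
    ∃ K : ℝ, ∀ ρ : ℝ, 1 / 2 ≤ ρ → ρ ≤ 1 → ∀ n : ℕ, 1 ≤ n →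
      tv (convPow (noised μ ρ) n) (fun p => convPow μ n p.1 * convPow μ n p.2) ≤
        K * (1 - ρ) + ε := by
  obtain ⟨Λ, hΛ, hfin, hcomm, J, T, _, _, _, ⟨E⟩⟩ := exists_lattice hFG hVA
  have : Fintype (Γ ⧸ Λ) := Fintype.ofFinite _
  have : Fintype T := Fintype.ofFinite _
  obtain ⟨C, hC, hdiag⟩ := exists_diagonal_decay hμ hnd E
  obtain ⟨K, hK, hbox⟩ := exists_box_tail_le E hμ hmom hnd (half_pos hε)
  refine ⟨K * C, fun ρ h0 h1 n hn => ?_⟩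
  obtain ⟨B, hcard, htail⟩ := hbox n hn
  have hn0 : √(n : ℝ) ≠ 0 := (Real.sqrt_pos.2 (by exact_mod_cast hn)).ne'
  refine (tv_noised_le hμ h0 h1 n (half_pos hε).le (hdiag n hn B) htail).trans ?_
  rw [mul_div_cancel₀ _ two_ne_zero]
  have h1' : 0 ≤ 1 - ρ := by linarith
  have hKC : B.card * (C * (√n)⁻¹ ^ Fintype.card J) ≤ K * C := by
    calc B.card * (C * (√n)⁻¹ ^ Fintype.card J)
        ≤ K * √n ^ Fintype.card J * (C * (√n)⁻¹ ^ Fintype.card J) := by gcongr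
      _ = K * C := by
        rw [inv_pow]
        field_simp
  gcongr

end TotalVariation

/-- `lim_{ρ→1} limsup_n ‖π^ρ_n − μ_n×μ_n‖_TV = 0`. -/
theorem tendsto_limsup_tv_noised_rho_one
    {Γ : Type*} [Group Γ] [Countable Γ] (hFG : Group.FG Γ) (hVA : VirtAbelian Γ)
    (μ : Γ → ℝ) (hμ : IsProb μ) (hmom : FinSecondMoment μ) (hnd : Nondeg μ) :
    Tendsto (fun ρ : ℝ =>
        Filter.limsup (fun n : ℕ => tv (convPow (noised μ ρ) n)
            (fun p : Γ × Γ => convPow μ n p.1 * convPow μ n p.2)) atTop)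
      (nhdsWithin 1 (Set.Ioc (0 : ℝ) 1)) (nhds 0) := by
  have hbound : ∀ ε > 0, ∃ K : ℝ, ∀ᶠ ρ in nhdsWithin 1 (Set.Ioc (0 : ℝ) 1), ∀ᶠ n : ℕ in atTop,
      tv (convPow (noised μ ρ) n) (fun p : Γ × Γ => convPow μ n p.1 * convPow μ n p.2) ≤
        K * (1 - ρ) + ε := by
    intro ε hε
    obtain ⟨K, hK⟩ := exists_tv_noised_le hFG hVA hμ hmom hnd hε
    refine ⟨K, ?_⟩
    filter_upwards [self_mem_nhdsWithin, mem_nhdsWithin_of_mem_nhds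
      (Ici_mem_nhds (by norm_num : (1 / 2 : ℝ) < 1))] with ρ h1 h0
    filter_upwards [eventually_ge_atTop 1] with n hn using hK ρ h0 h1.2 n hn
  refine tendsto_order.2 ⟨fun a ha => ?_, fun a ha => ?_⟩
  · obtain ⟨K, hK⟩ := hbound 1 one_pos
    filter_upwards [hK] with ρ hρ
    refine ha.trans_le (le_limsup_of_le ⟨_, hρ⟩ fun b hb => ?_)
    obtain ⟨n, hn⟩ := hb.exists
    exact (tv_nonneg _ _).trans hn
  · obtain ⟨K, hK⟩ := hbound (a / 2) (half_pos ha)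
    have hlim : Tendsto (fun ρ : ℝ => K * (1 - ρ) + a / 2) (nhdsWithin 1 (Set.Ioc (0 : ℝ) 1))
        (nhds (K * (1 - 1) + a / 2)) :=
      (Continuous.tendsto (by fun_prop) 1).mono_left nhdsWithin_le_nhds
    filter_upwards [hK, hlim.eventually_lt_const (by linarith : _ < a)] with ρ hρ hlt
    exact (limsup_le_of_le (isCoboundedUnder_le_of_le _ fun n => tv_nonneg _ _) hρ).trans_lt hlt

end NSVA
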